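/- arXiv:2510.05076 — 10 statements merged into one kernel-verified Lean document; each statement's English description precedes it below -/
import Mathlib

section
/- Let P ⊂ ℝⁿ be a lattice polytope whose affine span is all of ℝⁿ. If every edge of P contains at least n lattice points (i.e. P satisfies the LPE(n) property), then P is very ample. -/
/-- A point of `ℝⁿ` is a lattice point if all its coordinates are integers. -/
def IsLatticePoint {n : ℕ} (x : Fin n → ℝ) : Prop := ∀ i, ∃ z : ℤ, x i = (z : ℝ)

/-- The `k`-th dilation `kS = {k • x : x ∈ S}` of a set `S ⊆ ℝⁿ`. -/
def dilate {n : ℕ} (k : ℕ) (P : Set (Fin n → ℝ)) : Set (Fin n → ℝ) :=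
  (fun x => (k : ℝ) • x) '' P

/-- Every lattice point of `kP` is a sum of `k` lattice points of `P`. -/
def IsIDP {n : ℕ} (k : ℕ) (P : Set (Fin n → ℝ)) : Prop :=
  ∀ x ∈ dilate k P, IsLatticePoint x →
    ∃ f : Fin k → (Fin n → ℝ), (∀ i, f i ∈ P ∧ IsLatticePoint (f i)) ∧ x = ∑ i, f i

/-- A polytope is normal if for every `k ≥ 1` every lattice point of `kP`
is a sum of `k` lattice points of `P`. -/
def IsNormal {n : ℕ} (P : Set (Fin n → ℝ)) : Prop := ∀ k : ℕ, 1 ≤ k → IsIDP k P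

/-- A polytope is very ample if there is `k₀` such that for every `k ≥ k₀` every
lattice point of `kP` is a sum of `k` lattice points of `P`. -/
def IsVeryAmple {n : ℕ} (P : Set (Fin n → ℝ)) : Prop :=
  ∃ k₀ : ℕ, ∀ k : ℕ, k₀ ≤ k → IsIDP k P

/-- The rectangular simplex `Δ(λ) = conv{0, λ₁e₁, …, λₙeₙ}`. -/
def rectSimplex {n : ℕ} (lam : Fin n → ℕ) : Set (Fin n → ℝ) :=
  convexHull ℝ (insert 0 (Set.range fun i => Pi.single i ((lam i : ℝ))))

/-- An edge of `P`: a segment between two distinct extreme points of `P`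
which is an extreme subset of `P`. -/
def IsEdge {n : ℕ} (P : Set (Fin n → ℝ)) (v w : Fin n → ℝ) : Prop :=
  v ≠ w ∧ v ∈ P.extremePoints ℝ ∧ w ∈ P.extremePoints ℝ ∧
    IsExtreme ℝ P (segment ℝ v w)

/-- `P` has at least `k` lattice points on every edge. -/
def LPE {n : ℕ} (k : ℕ) (P : Set (Fin n → ℝ)) : Prop :=
  ∀ v w, IsEdge P v w →
    ∃ S : Finset (Fin n → ℝ), k ≤ S.card ∧ ∀ x ∈ S, x ∈ segment ℝ v w ∧ IsLatticePoint x

/-- The normality index: the least `k₀` such that `kP` is normal for all `k ≥ k₀`. -/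
noncomputable def munorm {n : ℕ} (P : Set (Fin n → ℝ)) : ℕ :=
  sInf {k₀ : ℕ | ∀ k : ℕ, k₀ ≤ k → IsNormal (dilate k P)}

/-- Almost 1-normality: with `L = lcm λᵢ`, `Lᵢ = L/λᵢ`, `d = gcd Lᵢ`, the number
`L - d` lies in the additive submonoid of `ℕ` generated by the `Lᵢ`. -/
def IsA1N {n : ℕ} (lam : Fin n → ℕ) : Prop :=
  Finset.univ.lcm lam - Finset.univ.gcd (fun i => Finset.univ.lcm lam / lam i) ∈
    AddSubmonoid.closure (Set.range fun i => Finset.univ.lcm lam / lam i)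


open scoped NNReal

/-- The lattice `ℤⁿ` as an additive subgroup of `ℝⁿ`. -/
def lattZ (n : ℕ) : AddSubgroup (Fin n → ℝ) where
  carrier := {x | IsLatticePoint x}
  zero_mem' := fun _ => ⟨0, by simp⟩
  add_mem' := by
    intro a b ha hb i
    obtain ⟨p, hp⟩ := ha i
    obtain ⟨q, hq⟩ := hb i
    exact ⟨p + q, by simp [hp, hq]⟩
  neg_mem' := by
    intro a ha i
    obtain ⟨p, hp⟩ := ha i
    exact ⟨-p, by simp [hp]⟩

lemma mem_lattZ {n : ℕ} {x : Fin n → ℝ} : x ∈ lattZ n ↔ IsLatticePoint x := Iff.rfl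

lemma natsmul_lattZ {n : ℕ} {x : Fin n → ℝ} (hx : x ∈ lattZ n) (k : ℕ) :
    (k : ℝ) • x ∈ lattZ n := by
  rw [Nat.cast_smul_eq_nsmul]
  exact nsmul_mem hx k

lemma finite_latt_bdd {n : ℕ} (s : Set (Fin n → ℝ)) (hs : Bornology.IsBounded s) :
    {x | x ∈ lattZ n ∧ x ∈ s}.Finite := by
  obtain ⟨R, hR⟩ := hs.exists_norm_le
  have hfin : (Set.Icc (fun _ => -⌈R⌉ : Fin n → ℤ) (fun _ => ⌈R⌉)).Finite := Set.finite_Icc _ _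
  refine (hfin.image (fun z i => (z i : ℝ))).subset ?_
  rintro x ⟨hx, hxs⟩
  choose z hz using hx
  refine ⟨z, ⟨fun i => ?_, fun i => ?_⟩, funext fun i => (hz i).symm⟩
  all_goals
    have h1 := (norm_le_pi_norm x i).trans (hR x hxs)
    rw [hz i, Real.norm_eq_abs, abs_le] at h1
    have h2 := Int.le_ceil R
  · have : ((-⌈R⌉ : ℤ) : ℝ) ≤ z i := by push_cast; linarith
    exact_mod_cast this
  · have : (z i : ℝ) ≤ (⌈R⌉ : ℤ) := by linarith
    exact_mod_cast this

lemma convex_zero_sum {E : Type*} [AddCommGroup E] [Module ℝ E] {Q : Set E} (hQ : Convex ℝ Q)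
    (h0 : (0 : E) ∈ Q) {ι : Type*} (s : Finset ι) (w : ι → ℝ) (z : ι → E)
    (hw : ∀ i ∈ s, 0 ≤ w i) (hsum : ∑ i ∈ s, w i ≤ 1) (hz : ∀ i ∈ s, z i ∈ Q) :
    ∑ i ∈ s, w i • z i ∈ Q := by
  rcases (Finset.sum_nonneg hw).eq_or_lt with h | h
  · have : ∀ i ∈ s, w i = 0 := (Finset.sum_eq_zero_iff_of_nonneg hw).1 h.symm
    rw [Finset.sum_eq_zero]
    · exact h0
    · intro i hi; rw [this i hi, zero_smul]
  · have h1 := hQ.centerMass_mem hw h hz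
    have h2 := hQ.smul_mem_of_zero_mem h0 h1 ⟨h.le, hsum⟩
    rwa [Finset.centerMass, smul_smul, mul_inv_cancel₀ h.ne', one_smul] at h2

/-- conic combination -/
def InCone {E : Type*} [AddCommGroup E] [Module ℝ E] (s : Finset E) (x : E) : Prop :=
  ∃ f : E → ℝ, (∀ a ∈ s, 0 ≤ f a) ∧ ∑ a ∈ s, f a • a = x

lemma inCone_of_span {E : Type*} [AddCommGroup E] [Module ℝ E] (s : Finset E) (x : E)
    (h : x ∈ Submodule.span ℝ≥0 (s : Set E)) : InCone s x := by
  obtain ⟨f, -, hf⟩ := Submodule.mem_span_finset.1 h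
  exact ⟨fun a => f a, fun a _ => (f a).2, hf⟩

lemma cone_cara {E : Type*} [AddCommGroup E] [Module ℝ E] (A : Finset E) (x : E)
    (h : InCone A x) : ∃ s ⊆ A, LinearIndepOn ℝ id (s : Set E) ∧ InCone s x := by
  classical
  induction A using Finset.strongInduction with
  | H A ih =>
    by_cases hli : LinearIndepOn ℝ id (A : Set E)
    · exact ⟨A, subset_rfl, hli, h⟩
    · suffices ∃ i ∈ A, InCone (A.erase i) x by
        obtain ⟨i, hi, hc⟩ := this
        obtain ⟨s, hs, h1, h2⟩ := ih _ (Finset.erase_ssubset hi) hc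
        exact ⟨s, hs.trans (Finset.erase_subset _ _), h1, h2⟩
      rw [linearIndepOn_finset_iff] at hli
      push Not at hli
      obtain ⟨g0, hg0, j, hj, hgj0⟩ := hli
      obtain ⟨g, hg, hgj⟩ : ∃ g : E → ℝ, ∑ i ∈ A, g i • i = 0 ∧ 0 < g j := by
        rcases lt_or_gt_of_ne hgj0 with hlt | hgt
        · refine ⟨fun i => - g0 i, ?_, by simpa using hlt⟩
          simpa using hg0
        · exact ⟨g0, hg0, hgt⟩
      obtain ⟨f, hf, rfl⟩ := h
      obtain ⟨i₀, hi₀, hmin⟩ := (A.filter (fun i => 0 < g i)).exists_min_image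
        (fun i => f i / g i) ⟨j, by simp [hj, hgj]⟩
      rw [Finset.mem_filter] at hi₀
      refine ⟨i₀, hi₀.1, fun i => f i - f i₀ / g i₀ * g i, ?_, ?_⟩
      · intro i hi
        have hiA := Finset.mem_of_mem_erase hi
        rcases le_or_gt (g i) 0 with hgi | hgi
        · have := div_nonneg (hf i₀ hi₀.1) hi₀.2.le
          nlinarith [hf i hiA]
        · have := hmin i (by simp [hiA, hgi])
          rw [le_div_iff₀ hgi] at this
          linarith
      · rw [Finset.sum_erase]
        · simp only [sub_smul, Finset.sum_sub_distrib, mul_smul]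
          rw [← Finset.smul_sum, hg]; simp
        · beta_reduce
          rw [div_mul_cancel₀ _ hi₀.2.ne', sub_self, zero_smul]

lemma local_gen {n N : ℕ} (hN1 : 1 ≤ N) (hN : n ≤ N + 1) {Q : Set (Fin n → ℝ)}
    (hQ : Convex ℝ Q) (h0 : (0 : Fin n → ℝ) ∈ Q) (A : Finset (Fin n → ℝ))
    (hA : ∀ w, w ∈ A ↔ w ∈ lattZ n ∧ (N : ℝ) • w ∈ Q) (x : Fin n → ℝ) (hx : x ∈ lattZ n)
    (hc : InCone A x) : x ∈ AddSubmonoid.closure {q | q ∈ lattZ n ∧ q ∈ Q} := by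
  classical
  have hNpos : (0 : ℝ) < N := by exact_mod_cast hN1
  have hN1' : (1 : ℝ) ≤ N := by exact_mod_cast hN1
  -- choose the representation with maximal coefficient sum
  let T : Finset (Finset (Fin n → ℝ)) := A.powerset.filter (fun s : Finset (Fin n → ℝ) =>
    LinearIndepOn ℝ id (s : Set (Fin n → ℝ)) ∧ InCone s x)
  have hT : T.Nonempty := by
    obtain ⟨s, hs, h1, h2⟩ := cone_cara A x hc
    exact ⟨s, by simp [T, hs, h1, h2]⟩
  have hF : ∀ s : Finset (Fin n → ℝ), ∃ f : (Fin n → ℝ) → ℝ, InCone s x →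
      (∀ a ∈ s, 0 ≤ f a) ∧ ∑ a ∈ s, f a • a = x := by
    intro s
    by_cases h : InCone s x
    · obtain ⟨f, hf⟩ := h
      exact ⟨f, fun _ => hf⟩
    · exact ⟨0, fun h' => absurd h' h⟩
  choose F hF using hF
  obtain ⟨s, hsT, hmax⟩ := T.exists_max_image (fun s => ∑ a ∈ s, F s a) hT
  simp only [T, Finset.mem_filter, Finset.mem_powerset] at hsT hmax
  obtain ⟨hsA, hli, hsc⟩ := hsT
  obtain ⟨hl0, hlx⟩ := hF s hsc
  set l := F s with hl
  have hcard : s.card ≤ n := by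
    have h := LinearIndependent.fintype_card_le_finrank hli
    simpa using h
  have hcard' : (s.card : ℝ) ≤ N + 1 := by exact_mod_cast hcard.trans hN
  have hcZ : ∑ a ∈ s, Int.fract (l a) • a ∈ lattZ n := by
    have : ∑ a ∈ s, Int.fract (l a) • a = x - ∑ a ∈ s, ⌊l a⌋ • a := by
      rw [← hlx, ← Finset.sum_sub_distrib]
      refine Finset.sum_congr rfl fun a _ => ?_
      rw [Int.fract, sub_smul, Int.cast_smul_eq_zsmul]
    rw [this]
    exact sub_mem hx (sum_mem fun a ha => zsmul_mem ((hA a).1 (hsA ha)).1 _)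
  by_cases hle : ∑ a ∈ s, Int.fract (l a) ≤ N
  · -- the good case
    have hxe : x = ∑ a ∈ s, ⌊l a⌋₊ • a + ∑ a ∈ s, Int.fract (l a) • a := by
      rw [← hlx, ← Finset.sum_add_distrib]
      refine Finset.sum_congr rfl fun a ha => ?_
      rw [← Nat.cast_smul_eq_nsmul ℝ, ← add_smul, natCast_floor_eq_intCast_floor (hl0 a ha),
        Int.floor_add_fract]
    rw [hxe]
    refine add_mem (sum_mem fun a ha => nsmul_mem (AddSubmonoid.subset_closure ?_) _)
      (AddSubmonoid.subset_closure ⟨hcZ, ?_⟩)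
    · obtain ⟨h1, h2⟩ := (hA a).1 (hsA ha)
      refine ⟨h1, ?_⟩
      have := hQ.smul_mem_of_zero_mem h0 h2 (t := (N : ℝ)⁻¹) ⟨by positivity, inv_le_one_of_one_le₀ hN1'⟩
      rwa [smul_smul, inv_mul_cancel₀ hNpos.ne', one_smul] at this
    · have := convex_zero_sum hQ h0 s (fun a => Int.fract (l a) / N) (fun a => (N : ℝ) • a)
        (fun a _ => div_nonneg (Int.fract_nonneg _) hNpos.le)
        (by rw [← Finset.sum_div, div_le_one hNpos]; exact hle)
        (fun a ha => ((hA a).1 (hsA ha)).2)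
      simpa [smul_smul, div_mul_cancel₀ _ hNpos.ne'] using this
  · exfalso
    push Not at hle
    set e : (Fin n → ℝ) → ℝ := fun a => 1 - Int.fract (l a) with he
    have hepos : ∀ a, 0 < e a := fun a => by
      have := Int.fract_lt_one (l a); simp only [he]; linarith
    have hesum : ∑ a ∈ s, e a < 1 := by
      simp only [he, Finset.sum_sub_distrib, Finset.sum_const, nsmul_eq_mul, mul_one]
      linarith
    have hlpos : ∀ a ∈ s, 0 < l a := by
      intro a ha
      have h1 : e a ≤ ∑ a ∈ s, e a := Finset.single_le_sum (fun b _ => (hepos b).le) ha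
      have h2 : 0 < Int.fract (l a) := by simp only [he] at h1 hesum; linarith
      refine (hl0 a ha).lt_of_ne fun h => ?_
      rw [← h] at h2; simp at h2
    set y := ∑ a ∈ s, e a • a with hy
    have hyA : y ∈ A := by
      rw [hA]
      constructor
      · have : y = ∑ a ∈ s, a - ∑ a ∈ s, Int.fract (l a) • a := by
          rw [hy, ← Finset.sum_sub_distrib]
          refine Finset.sum_congr rfl fun a _ => ?_
          rw [he]; simp [sub_smul]
        rw [this]
        exact sub_mem (sum_mem fun a ha => ((hA a).1 (hsA ha)).1) hcZ
      · have := convex_zero_sum hQ h0 s e (fun a => (N : ℝ) • a)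
          (fun a _ => (hepos a).le) hesum.le (fun a ha => ((hA a).1 (hsA ha)).2)
        rw [hy, Finset.smul_sum]
        simpa only [smul_comm (N : ℝ)] using this
    have hsne : s.Nonempty := by
      rw [Finset.nonempty_iff_ne_empty]
      rintro h
      rw [h] at hle
      simp at hle
      linarith
    obtain ⟨i, hi, hmin⟩ := s.exists_min_image (fun a => l a / e a) hsne
    set t := l i / e i with ht
    have htpos : 0 < t := div_pos (hlpos i hi) (hepos i)
    have hyspan : y ∉ Submodule.span ℝ ((s.erase i : Finset _) : Set (Fin n → ℝ)) := by
      intro hmem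
      have h1 : e i • i ∈ Submodule.span ℝ ((s.erase i : Finset _) : Set (Fin n → ℝ)) := by
        have : e i • i = y - ∑ a ∈ s.erase i, e a • a := by
          rw [hy, ← Finset.add_sum_erase s _ hi]; abel
        rw [this]
        exact sub_mem hmem (sum_mem fun a ha => Submodule.smul_mem _ _ (Submodule.subset_span ha))
      have h2 : i ∈ Submodule.span ℝ ((s.erase i : Finset _) : Set (Fin n → ℝ)) := by
        have := Submodule.smul_mem _ (e i)⁻¹ h1
        rwa [smul_smul, inv_mul_cancel₀ (hepos i).ne', one_smul] at this
      rw [← Finset.insert_erase hi, Finset.coe_insert,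
        linearIndepOn_insert (by simp)] at hli
      exact hli.2 (by simpa using h2)
    have hyn : y ∉ s.erase i := fun h => hyspan (Submodule.subset_span h)
    have hli' : LinearIndepOn ℝ id ((insert y (s.erase i) : Finset _) : Set (Fin n → ℝ)) := by
      rw [Finset.coe_insert, linearIndepOn_insert (fun h => hyn (Finset.mem_coe.1 h))]
      refine ⟨hli.mono (by simp), by simpa using hyspan⟩
    let f' : (Fin n → ℝ) → ℝ := fun a => if a = y then t else l a - t * e a
    have hne : ∀ a ∈ s.erase i, f' a = l a - t * e a := by
      intro a ha
      simp only [f']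
      rw [if_neg]
      rintro rfl
      exact hyn ha
    have hfy : f' y = t := by simp [f']
    have hti : l i - t * e i = 0 := by
      rw [ht, div_mul_cancel₀ _ (hepos i).ne', sub_self]
    have hf'x : ∑ a ∈ insert y (s.erase i), f' a • a = x := by
      rw [Finset.sum_insert hyn, hfy, Finset.sum_congr rfl (fun a ha => by rw [hne a ha]),
        Finset.sum_erase _ (by rw [hti, zero_smul])]
      simp only [sub_smul, Finset.sum_sub_distrib, mul_smul]
      rw [← Finset.smul_sum, ← hy, hlx]; abel
    have hf'sum : ∑ a ∈ insert y (s.erase i), f' a = t + (∑ a ∈ s, l a - t * ∑ a ∈ s, e a) := by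
      rw [Finset.sum_insert hyn, hfy, Finset.sum_congr rfl (fun a ha => by rw [hne a ha]),
        Finset.sum_erase (f := fun a => l a - t * e a) _ hti, Finset.sum_sub_distrib, Finset.mul_sum]
    have hf'0 : ∀ a ∈ insert y (s.erase i), 0 ≤ f' a := by
      intro a ha
      rcases Finset.mem_insert.1 ha with rfl | ha
      · rw [hfy]; exact htpos.le
      · rw [hne a ha]
        have := hmin a (Finset.mem_of_mem_erase ha)
        rw [le_div_iff₀ (hepos a)] at this
        linarith
    have hc' : InCone (insert y (s.erase i)) x := ⟨f', hf'0, hf'x⟩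
    have hm := hmax (insert y (s.erase i)) ⟨?_, hli', hc'⟩
    · obtain ⟨-, hG⟩ := hF _ hc'
      have huniq : ∀ a ∈ insert y (s.erase i), F (insert y (s.erase i)) a = f' a := by
        intro a ha
        have := linearIndepOn_finset_iff.1 hli' (fun a => F (insert y (s.erase i)) a - f' a)
          (by simp only [id, sub_smul, Finset.sum_sub_distrib]; rw [hG, hf'x, sub_self]) a ha
        exact sub_eq_zero.1 this
      rw [Finset.sum_congr rfl huniq, hf'sum] at hm
      nlinarith
    · intro a ha
      rcases Finset.mem_insert.1 ha with rfl | ha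
      · exact hyA
      · exact hsA (Finset.mem_of_mem_erase ha)

lemma nnspan_smul {E : Type*} [AddCommGroup E] [Module ℝ E] (S : Submodule ℝ≥0 E) {c : ℝ}
    (hc : 0 ≤ c) {x : E} (hx : x ∈ S) : c • x ∈ S := by
  have := S.smul_mem c.toNNReal hx
  rwa [NNReal.smul_def, Real.coe_toNNReal c hc] at this

section Edges

variable {n : ℕ} {P : Set (Fin n → ℝ)} {v : Fin n → ℝ}

lemma tangent_eps (hP : Convex ℝ P) (hv : v ∈ P) (q : Fin n → ℝ)
    (hq : q ∈ Submodule.span ℝ≥0 {q | v + q ∈ P}) : ∃ ε : ℝ, 0 < ε ∧ v + ε • q ∈ P := by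
  have key : ∀ (q : Fin n → ℝ) (ε δ : ℝ), v + ε • q ∈ P → 0 ≤ δ → δ ≤ ε → 0 < ε →
      v + δ • q ∈ P := by
    intro q ε δ h h0 h1 h2
    have := hP hv h (a := 1 - δ / ε) (b := δ / ε)
      (by rw [sub_nonneg, div_le_one h2]; exact h1) (by positivity) (by ring)
    convert this using 1
    rw [smul_add, smul_smul, div_mul_cancel₀ _ h2.ne']
    module
  induction hq using Submodule.span_induction with
  | mem x h => exact ⟨1, one_pos, by simpa using h⟩
  | zero => exact ⟨1, one_pos, by simpa using hv⟩
  | add x y _ _ hx hy =>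
    obtain ⟨a, ha, hax⟩ := hx
    obtain ⟨b, hb, hby⟩ := hy
    have hm : 0 < min a b := lt_min ha hb
    have h1 := key x a _ hax hm.le (min_le_left _ _) ha
    have h2 := key y b _ hby hm.le (min_le_right _ _) hb
    refine ⟨min a b / 2, by positivity, ?_⟩
    have := hP h1 h2 (a := 1/2) (b := 1/2) (by norm_num) (by norm_num) (by norm_num)
    convert this using 1
    module
  | smul c x _ hx =>
    obtain ⟨a, ha, hax⟩ := hx
    rcases eq_or_ne c 0 with rfl | hc
    · exact ⟨1, one_pos, by simpa using hv⟩
    · have hc' : (0 : ℝ) < c := by positivity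
      refine ⟨a / c, by positivity, ?_⟩
      rw [NNReal.smul_def, smul_smul, div_mul_cancel₀ _ hc'.ne']
      exact hax

lemma tangent_pointed (hP : Convex ℝ P) (hv : v ∈ P.extremePoints ℝ) (q : Fin n → ℝ)
    (hq : q ∈ Submodule.span ℝ≥0 {q | v + q ∈ P})
    (hq' : -q ∈ Submodule.span ℝ≥0 {q | v + q ∈ P}) : q = 0 := by
  obtain ⟨a, ha, hax⟩ := tangent_eps hP hv.1 q hq
  obtain ⟨b, hb, hby⟩ := tangent_eps hP hv.1 _ hq'
  have := hv.2 hax hby ⟨b / (a + b), a / (a + b), by positivity, by positivity,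
    by field_simp; ring, by
      have : b / (a + b) * a - a / (a + b) * b = 0 := by field_simp; ring
      have h2 : b / (a + b) + a / (a + b) = 1 := by field_simp; ring
      calc _ = (b / (a + b) + a / (a + b)) • v + (b / (a + b) * a - a / (a + b) * b) • q := by
            module
        _ = v := by rw [this, h2]; module⟩
  have h : a • q = 0 := by simpa using this
  exact (smul_eq_zero.1 h).resolve_left ha.ne'

lemma edge_of_ray (hP : Convex ℝ P) (hPc : IsCompact P) (hv : v ∈ P.extremePoints ℝ)
    (t : Fin n → ℝ) (ht0 : t ≠ 0) (ht : v + t ∈ P)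
    (hray : ∀ a ∈ Submodule.span ℝ≥0 {q | v + q ∈ P}, ∀ b ∈ Submodule.span ℝ≥0 {q | v + q ∈ P},
      ∀ c : ℝ, 0 ≤ c → a + b = c • t → ∃ α : ℝ, 0 ≤ α ∧ a = α • t) :
    ∃ s : ℝ, 1 ≤ s ∧ IsEdge P v (v + s • t) := by
  have hcont : Continuous (fun s : ℝ => v + s • t) := by fun_prop
  -- the maximal parameter
  have hemb : Topology.IsClosedEmbedding (fun s : ℝ => v + s • t) :=
    (Homeomorph.addLeft v).isClosedEmbedding.comp (isClosedEmbedding_smul_left ht0)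
  have hcomp : IsCompact ((fun s : ℝ => v + s • t) ⁻¹' P) := hemb.isCompact_preimage hPc
  obtain ⟨s, hsP, hsmax⟩ := hcomp.exists_isMaxOn ⟨1, by simpa using ht⟩ continuous_id.continuousOn
  have hmax : ∀ r : ℝ, v + r • t ∈ P → r ≤ s := fun r hr => hsmax hr
  have hs1 : 1 ≤ s := hmax 1 (by simpa using ht)
  have hs0 : 0 < s := by linarith
  have hseg : ∀ y, y ∈ segment ℝ v (v + s • t) ↔ ∃ r : ℝ, 0 ≤ r ∧ r ≤ s ∧ y = v + r • t := by
    intro y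
    rw [segment_eq_image']
    constructor
    · rintro ⟨θ, ⟨h0, h1⟩, rfl⟩
      exact ⟨θ * s, by positivity, by nlinarith, by simp [smul_smul]⟩
    · rintro ⟨r, h0, h1, rfl⟩
      refine ⟨r / s, ⟨by positivity, by rw [div_le_one hs0]; exact h1⟩, ?_⟩
      simp [smul_smul, div_mul_cancel₀ _ hs0.ne']
  have hext : ∀ y ∈ P, ∀ z ∈ P, ∀ r : ℝ, 0 ≤ r → v + r • t ∈ openSegment ℝ y z →
      ∃ r' : ℝ, 0 ≤ r' ∧ r' ≤ s ∧ y = v + r' • t := by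
    rintro y hy z hz r hr ⟨α, β, hα, hβ, hab, h⟩
    have hmem : ∀ y ∈ P, ∀ α : ℝ, 0 < α →
        α • (y - v) ∈ Submodule.span ℝ≥0 {q | v + q ∈ P} := by
      intro y hy α hα
      exact nnspan_smul _ hα.le (Submodule.subset_span (by simpa using hy))
    obtain ⟨γ, hγ, hγe⟩ := hray _ (hmem y hy α hα) _ (hmem z hz β hβ) r hr (by
      have : α • (y - v) + β • (z - v) = (α • y + β • z) - (α + β) • v := by module
      rw [this, h, hab]; module)
    have hy' : y = v + (γ / α) • t := by
      rw [div_eq_inv_mul, mul_smul, ← hγe, smul_smul, inv_mul_cancel₀ hα.ne']; simp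
    exact ⟨γ / α, by positivity, hmax _ (hy' ▸ hy), hy'⟩
  refine ⟨s, hs1, ?_, hv, ⟨hsP, ?_⟩, ⟨?_, ?_⟩⟩
  · intro h
    have h' : s • t = 0 := by simpa using h.symm
    exact (smul_ne_zero hs0.ne' ht0) h'
  · intro y hy z hz hyz
    obtain ⟨r1, h1, h1s, rfl⟩ := hext y hy z hz s hs0.le hyz
    obtain ⟨r2, h2, h2s, rfl⟩ := hext z hz _ hy s hs0.le (by rw [openSegment_symm]; exact hyz)
    obtain ⟨α, β, hα, hβ, hab, h⟩ := hyz
    have h3 : (α * r1 + β * r2 - s) • t = 0 := by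
      have e : (α * r1 + β * r2 - s) • t
          = (α • (v + r1 • t) + β • (v + r2 • t)) - (α + β) • v - s • t := by module
      rw [e, h, hab]; module
    have h4 : α * r1 + β * r2 - s = 0 := (smul_eq_zero.1 h3).resolve_right ht0
    have h5 : r1 = s := by
      apply le_antisymm h1s
      have : α * s ≤ α * r1 := by nlinarith
      exact le_of_mul_le_mul_left this hα
    rw [h5]
  · exact hP.segment_subset hv.1 hsP
  · intro y hy z hz w hw hwo
    obtain ⟨r, h0, -, rfl⟩ := (hseg w).1 hw
    exact (hseg y).2 (hext y hy z hz r h0 hwo)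

/-- The tangent cone at a vertex is generated by edge directions. -/
lemma tangent_gen (V : Finset (Fin n → ℝ)) (hPV : P = convexHull ℝ (V : Set (Fin n → ℝ)))
    (hv : v ∈ P.extremePoints ℝ) (D : Set (Fin n → ℝ))
    (hD : ∀ w, IsEdge P v w → w - v ∈ Submodule.span ℝ≥0 D) :
    Submodule.span ℝ≥0 {q | v + q ∈ P} ≤ Submodule.span ℝ≥0 D := by
  classical
  have hP : Convex ℝ P := hPV ▸ convex_convexHull ℝ _
  have hPc : IsCompact P := hPV ▸ V.finite_toSet.isCompact_convexHull ℝ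
  let B := V.image (fun x => x - v)
  have hBP : ∀ b ∈ B, v + b ∈ P := by
    intro b hb
    obtain ⟨x, hx, rfl⟩ := Finset.mem_image.1 hb
    rw [add_sub_cancel, hPV]
    exact subset_convexHull ℝ _ hx
  have hQB : ∀ q, v + q ∈ P → q ∈ Submodule.span ℝ≥0 (B : Set (Fin n → ℝ)) := by
    intro q hq
    rw [hPV, Finset.mem_convexHull'] at hq
    obtain ⟨w, hw0, hw1, hw⟩ := hq
    have : q = ∑ y ∈ V, w y • (y - v) := by
      simp only [smul_sub, Finset.sum_sub_distrib]
      rw [hw, ← Finset.sum_smul, hw1]; simp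
    rw [this]
    refine sum_mem fun y hy => ?_
    exact nnspan_smul _ (hw0 y hy)
      (Submodule.subset_span (Finset.mem_coe.2 (Finset.mem_image_of_mem _ hy)))
  obtain ⟨T, hTmin⟩ := (B.powerset.filter (fun T : Finset (Fin n → ℝ) =>
      (B : Set (Fin n → ℝ)) ⊆ Submodule.span ℝ≥0 (T : Set (Fin n → ℝ)))).exists_minimal
      ⟨B, by simp [Submodule.subset_span]⟩
  obtain ⟨hT, hmin⟩ := hTmin
  rw [Finset.mem_filter, Finset.mem_powerset] at hT
  obtain ⟨hTB, hTs⟩ := hT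
  have hBT : Submodule.span ℝ≥0 (B : Set (Fin n → ℝ)) ≤ Submodule.span ℝ≥0 (T : Set (Fin n → ℝ)) :=
    Submodule.span_le.2 hTs
  have hQT : Submodule.span ℝ≥0 {q | v + q ∈ P} ≤ Submodule.span ℝ≥0 (T : Set (Fin n → ℝ)) :=
    Submodule.span_le.2 fun q hq => hBT (hQB q hq)
  have hTQ : Submodule.span ℝ≥0 (T : Set (Fin n → ℝ)) ≤ Submodule.span ℝ≥0 {q | v + q ∈ P} :=
    Submodule.span_mono fun b hb => hBP b (hTB hb)
  refine hQT.trans (Submodule.span_le.2 fun t ht => ?_)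
  have htT : t ∈ T := ht
  have hterase : t ∉ Submodule.span ℝ≥0 ((T.erase t : Finset _) : Set (Fin n → ℝ)) := by
    intro h
    have hle : Submodule.span ℝ≥0 (T : Set (Fin n → ℝ)) ≤
        Submodule.span ℝ≥0 ((T.erase t : Finset _) : Set (Fin n → ℝ)) := by
      rw [Submodule.span_le]
      intro x hx
      by_cases hxt : x = t
      · rw [hxt]; exact h
      · exact Submodule.subset_span (Finset.mem_coe.2 (Finset.mem_erase.2 ⟨hxt, hx⟩))
    have := hmin (y := T.erase t) (by
      beta_reduce
      rw [Finset.mem_filter, Finset.mem_powerset]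
      exact ⟨(Finset.erase_subset _ _).trans hTB, hTs.trans hle⟩) (Finset.erase_subset _ _)
    exact Finset.notMem_erase t T (this htT)
  have ht0 : t ≠ 0 := by
    rintro rfl
    exact hterase (zero_mem _)
  have heT : Submodule.span ℝ≥0 ((T.erase t : Finset _) : Set (Fin n → ℝ)) ≤
      Submodule.span ℝ≥0 {q | v + q ∈ P} :=
    (Submodule.span_mono (by simp)).trans hTQ
  have htQ : t ∈ Submodule.span ℝ≥0 {q | v + q ∈ P} := hTQ (Submodule.subset_span ht)
  obtain ⟨s, hs, hE⟩ := edge_of_ray hP hPc hv t ht0 (hBP t (hTB ht)) (by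
    intro a ha b hb c hc hab
    have hTi : (T : Set (Fin n → ℝ)) = insert t ((T.erase t : Finset _) : Set (Fin n → ℝ)) := by
      rw [← Finset.coe_insert, Finset.insert_erase htT]
    have ha' := hQT ha
    have hb' := hQT hb
    rw [hTi, Submodule.mem_span_insert] at ha' hb'
    obtain ⟨α, a', ha', rfl⟩ := ha'
    obtain ⟨β, b', hb', rfl⟩ := hb'
    simp only [NNReal.smul_def] at hab ⊢
    have hsum : a' + b' = (c - α - β) • t := by
      have : a' + b' = ((α : ℝ) • t + a' + ((β : ℝ) • t + b')) - (α + β : ℝ) • t := by module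
      rw [this, hab]; module
    have hzero : a' + b' = 0 := by
      rcases lt_or_ge 0 (c - α - β) with h | h
      · exfalso
        apply hterase
        have h1 := nnspan_smul _ (inv_nonneg.2 h.le) (add_mem ha' hb')
        rwa [hsum, smul_smul, inv_mul_cancel₀ h.ne', one_smul] at h1
      · apply tangent_pointed hP hv _ (heT (add_mem ha' hb'))
        have h1 := nnspan_smul _ (neg_nonneg.2 h) htQ
        rw [hsum, ← neg_smul]
        exact h1
    have ha0 : a' = 0 := by
      apply tangent_pointed hP hv _ (heT ha')
      rw [neg_eq_of_add_eq_zero_right hzero]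
      exact heT hb'
    exact ⟨α, α.2, by rw [ha0, add_zero]⟩)
  have h := hD _ hE
  rw [add_sub_cancel_left] at h
  have hs0 : 0 < s := by linarith
  have h2 := nnspan_smul _ (inv_nonneg.2 hs0.le) h
  rwa [smul_smul, inv_mul_cancel₀ hs0.ne', one_smul] at h2

end Edges

section Global

variable {n : ℕ} {P : Set (Fin n → ℝ)}

lemma edge_pigeon {v d : Fin n → ℝ} (hd : d ≠ 0) (hdZ : d ∈ lattZ n)
    (h : ∃ S : Finset (Fin n → ℝ), n ≤ S.card ∧
      ∀ x ∈ S, x ∈ segment ℝ v (v + d) ∧ IsLatticePoint x) :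
    ∃ τ : ℝ, 0 < τ ∧ ((max (n - 1) 1 : ℕ) : ℝ) * τ ≤ 1 ∧ τ • d ∈ lattZ n := by
  classical
  rcases le_or_gt n 2 with hn | hn
  · refine ⟨1, one_pos, ?_, by simpa using hdZ⟩
    have : max (n - 1) 1 = 1 := by omega
    rw [this]; simp
  · obtain ⟨S, hS, hx⟩ := h
    have hN : max (n - 1) 1 = n - 1 := by omega
    rw [hN]
    have hNpos : (0 : ℝ) < ((n - 1 : ℕ) : ℝ) := by
      have : 0 < n - 1 := by omega
      exact_mod_cast this
    have hθ : ∀ x : Fin n → ℝ, ∃ θ : ℝ, x ∈ S → 0 ≤ θ ∧ θ ≤ 1 ∧ x = v + θ • d := by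
      intro x
      by_cases hxS : x ∈ S
      · have := (hx x hxS).1
        rw [segment_eq_image'] at this
        obtain ⟨θ, ⟨h0, h1⟩, rfl⟩ := this
        exact ⟨θ, fun _ => ⟨h0, h1, by simp⟩⟩
      · exact ⟨0, fun h => absurd h hxS⟩
    choose θ hθ using hθ
    obtain ⟨x, hxS, y, hyS, hxy, hb⟩ := Finset.exists_ne_map_eq_of_card_lt_of_maps_to
      (s := S) (t := Finset.range (n - 1))
      (f := fun x => min ⌊((n - 1 : ℕ) : ℝ) * θ x⌋₊ (n - 2))
      (by rw [Finset.card_range]; omega)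
      (by intro x _; simp only [Finset.coe_range, Set.mem_Iio]; omega)
    have hbin : ∀ x ∈ S, ((min ⌊((n - 1 : ℕ) : ℝ) * θ x⌋₊ (n - 2) : ℕ) : ℝ)
        ≤ ((n - 1 : ℕ) : ℝ) * θ x ∧ ((n - 1 : ℕ) : ℝ) * θ x ≤
        ((min ⌊((n - 1 : ℕ) : ℝ) * θ x⌋₊ (n - 2) : ℕ) : ℝ) + 1 := by
      intro x hxS
      obtain ⟨h0, h1, -⟩ := hθ x hxS
      have hf := Nat.floor_le (mul_nonneg hNpos.le h0)
      have hf' := (Nat.lt_floor_add_one (((n - 1 : ℕ) : ℝ) * θ x)).le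
      constructor
      · refine le_trans ?_ hf
        exact_mod_cast min_le_left _ _
      · rcases min_choice ⌊((n - 1 : ℕ) : ℝ) * θ x⌋₊ (n - 2) with h | h
        · rw [h]; exact hf'
        · rw [h]
          have : ((n - 1 : ℕ) : ℝ) = ((n - 2 : ℕ) : ℝ) + 1 := by
            have : n - 1 = (n - 2) + 1 := by omega
            exact_mod_cast this
          rw [← this]
          nlinarith
    have main : ∀ x ∈ S, ∀ y ∈ S, θ y < θ x →
        min ⌊((n - 1 : ℕ) : ℝ) * θ x⌋₊ (n - 2) = min ⌊((n - 1 : ℕ) : ℝ) * θ y⌋₊ (n - 2) →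
        ∃ τ : ℝ, 0 < τ ∧ ((n - 1 : ℕ) : ℝ) * τ ≤ 1 ∧ τ • d ∈ lattZ n := by
      intro x hxS y hyS hlt he
      refine ⟨θ x - θ y, by linarith, ?_, ?_⟩
      · have h1 := (hbin x hxS).2
        have h2 := (hbin y hyS).1
        rw [he] at h1
        rw [mul_sub]; linarith
      · have : (θ x - θ y) • d = x - y := by
          nth_rw 2 [(hθ x hxS).2.2]
          nth_rw 2 [(hθ y hyS).2.2]
          module
        rw [this]
        exact sub_mem (hx x hxS).2 (hx y hyS).2
    rcases lt_trichotomy (θ x) (θ y) with h | h | h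
    · exact main y hyS x hxS h hb.symm
    · exact absurd (by rw [(hθ x hxS).2.2, (hθ y hyS).2.2, h]) hxy
    · exact main x hxS y hyS h hb

lemma vertex_gen (V : Finset (Fin n → ℝ)) (hV : ∀ x ∈ V, IsLatticePoint x)
    (hPV : P = convexHull ℝ (V : Set (Fin n → ℝ))) (hLPE : LPE n P)
    {v : Fin n → ℝ} (hv : v ∈ P.extremePoints ℝ) (x : Fin n → ℝ) (hx : x ∈ lattZ n)
    (hxc : x ∈ Submodule.span ℝ≥0 {q | v + q ∈ P}) :
    x ∈ AddSubmonoid.closure {q | q ∈ lattZ n ∧ v + q ∈ P} := by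
  have hP : Convex ℝ P := hPV ▸ convex_convexHull ℝ _
  have hPc : IsCompact P := hPV ▸ V.finite_toSet.isCompact_convexHull ℝ
  have hextV : ∀ w ∈ P.extremePoints ℝ, w ∈ lattZ n := by
    intro w hw
    rw [hPV] at hw
    exact hV w (extremePoints_convexHull_subset hw)
  set N := max (n - 1) 1 with hN
  have hNpos : (0 : ℝ) < N := by
    have : 0 < N := by omega
    exact_mod_cast this
  have hfin : {w | w ∈ lattZ n ∧ w ∈ {w : Fin n → ℝ | v + (N : ℝ) • w ∈ P}}.Finite := by
    apply finite_latt_bdd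
    refine ((hPc.image (f := fun y => (N : ℝ)⁻¹ • (y - v)) (by fun_prop)).isBounded).subset ?_
    intro w hw
    refine ⟨_, hw, ?_⟩
    simp [smul_smul, inv_mul_cancel₀ hNpos.ne']
  have hQ : Convex ℝ {q | v + q ∈ P} := by
    have := hP.translate_preimage_right v
    exact this
  have h0 : (0 : Fin n → ℝ) ∈ {q | v + q ∈ P} := by simpa using hv.1
  have hspan := tangent_gen V hPV hv (hfin.toFinset : Set (Fin n → ℝ)) (by
    intro w hw
    have hdZ : w - v ∈ lattZ n := sub_mem (hextV w hw.2.2.1) (hextV v hv)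
    obtain ⟨τ, h1, h2, h3⟩ := edge_pigeon (v := v) (d := w - v) (sub_ne_zero.2 hw.1.symm) hdZ
      (by rw [add_sub_cancel]; exact hLPE v w hw)
    have hmem : τ • (w - v) ∈ Submodule.span ℝ≥0 (hfin.toFinset : Set (Fin n → ℝ)) := by
      apply Submodule.subset_span
      rw [Set.Finite.coe_toFinset]
      refine ⟨h3, ?_⟩
      have := hQ.smul_mem_of_zero_mem h0 (x := w - v) (by simpa using hw.2.2.1.1)
        (t := N * τ) ⟨by positivity, h2⟩
      rwa [mul_smul] at this
    have := nnspan_smul _ (inv_nonneg.2 h1.le) hmem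
    rwa [smul_smul, inv_mul_cancel₀ h1.ne', one_smul] at this)
  refine local_gen (N := N) (by omega) (by omega) hQ h0 hfin.toFinset (by simp) x hx ?_
  exact inCone_of_span _ _ (hspan hxc)

/-- `x` is a sum of `k` lattice points of `P`. -/
def SumK (P : Set (Fin n → ℝ)) (k : ℕ) (x : Fin n → ℝ) : Prop :=
  ∃ f : Fin k → (Fin n → ℝ), (∀ i, f i ∈ P ∧ IsLatticePoint (f i)) ∧ x = ∑ i, f i

lemma SumK.add {k l : ℕ} {x y : Fin n → ℝ} (hx : SumK P k x) (hy : SumK P l y) :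
    SumK P (k + l) (x + y) := by
  obtain ⟨f, hf, rfl⟩ := hx
  obtain ⟨g, hg, rfl⟩ := hy
  refine ⟨Fin.append f g, fun i => ?_, ?_⟩
  · refine Fin.addCases (fun i => ?_) (fun i => ?_) i
    · simpa using hf i
    · simpa using hg i
  · simp [Fin.sum_univ_add]

lemma SumK.nsmul {x : Fin n → ℝ} (hx : x ∈ P) (hxZ : IsLatticePoint x) (k : ℕ) :
    SumK P k (k • x) := ⟨fun _ => x, fun _ => ⟨hx, hxZ⟩, by simp⟩

lemma SumK.zero : SumK P 0 0 := ⟨fun _ => 0, fun i => i.elim0, by simp⟩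

lemma SumK.sum {ι : Type*} (s : Finset ι) (m : ι → ℕ) (p : ι → Fin n → ℝ)
    (hp : ∀ i ∈ s, p i ∈ P ∧ IsLatticePoint (p i)) : SumK P (∑ i ∈ s, m i) (∑ i ∈ s, m i • p i) := by
  classical
  induction s using Finset.induction_on with
  | empty => simpa using SumK.zero
  | insert a s ha ih =>
    rw [Finset.sum_insert ha, Finset.sum_insert ha]
    have h := hp a (Finset.mem_insert_self _ _)
    exact (SumK.nsmul h.1 h.2 _).add (ih fun i hi => hp i (Finset.mem_insert_of_mem hi))

lemma sumK_of_closure {v : Fin n → ℝ} (hv : v ∈ P) (hvZ : v ∈ lattZ n) (q : Fin n → ℝ)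
    (hq : q ∈ AddSubmonoid.closure {q | q ∈ lattZ n ∧ v + q ∈ P}) :
    ∃ m₀ : ℕ, ∀ m ≥ m₀, SumK P m (q + m • v) := by
  suffices ∃ m₀ : ℕ, SumK P m₀ (q + m₀ • v) by
    obtain ⟨m₀, h⟩ := this
    refine ⟨m₀, fun m hm => ?_⟩
    obtain ⟨l, rfl⟩ := Nat.exists_eq_add_of_le hm
    have := h.add (SumK.nsmul hv hvZ l)
    rwa [add_assoc, ← add_smul] at this
  induction hq using AddSubmonoid.closure_induction with
  | mem x hx =>
    refine ⟨1, ?_⟩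
    have := SumK.nsmul (P := P) (x := v + x) hx.2 (add_mem hvZ hx.1) 1
    simpa [add_comm] using this
  | zero => exact ⟨0, by simpa using SumK.zero⟩
  | add x y _ _ hx hy =>
    obtain ⟨a, ha⟩ := hx
    obtain ⟨b, hb⟩ := hy
    refine ⟨a + b, ?_⟩
    have := ha.add hb
    convert this using 1
    rw [add_smul]; abel

end Global

/-- Payne. If a full-dimensional lattice polytope `P ⊂ ℝⁿ` has at
least `n` lattice points on every edge, then `P` is very ample. -/
theorem stmt_0 (n : ℕ) (V : Finset (Fin n → ℝ)) (hV : ∀ x ∈ V, IsLatticePoint x)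
    (P : Set (Fin n → ℝ)) (hP : P = convexHull ℝ (V : Set (Fin n → ℝ)))
    (hspan : affineSpan ℝ P = ⊤) (hLPE : LPE n P) :
    IsVeryAmple P := by
  classical
  have hPc : IsCompact P := hP ▸ V.finite_toSet.isCompact_convexHull ℝ
  have hPconv : Convex ℝ P := hP ▸ convex_convexHull ℝ _
  have hextV : P.extremePoints ℝ ⊆ V := by
    rw [hP]; exact extremePoints_convexHull_subset
  have hfinE : (P.extremePoints ℝ).Finite := V.finite_toSet.subset hextV
  set W := hfinE.toFinset with hW
  have hWE : ∀ w ∈ W, w ∈ P.extremePoints ℝ := fun w hw => hfinE.mem_toFinset.1 hw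
  have hWZ : ∀ w ∈ W, w ∈ lattZ n := fun w hw => hV w (hextV (hWE w hw))
  have hPW : P = convexHull ℝ (W : Set (Fin n → ℝ)) := by
    have h := closure_convexHull_extremePoints hPc hPconv
    rw [(hfinE.isClosed_convexHull ℝ).closure_eq] at h
    rw [hW, Set.Finite.coe_toFinset, h]
  -- the finite set of remainders
  let D : Set (Fin n → ℝ) := {r | r ∈ lattZ n ∧ r ∈ {r | ∃ c : (Fin n → ℝ) → ℝ,
    (∀ w ∈ W, 0 ≤ c w ∧ c w ≤ 1) ∧ r = ∑ w ∈ W, c w • w}}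
  have hD : D.Finite := by
    apply finite_latt_bdd
    rw [isBounded_iff_forall_norm_le]
    refine ⟨∑ w ∈ W, ‖w‖, ?_⟩
    rintro r ⟨c, hc, rfl⟩
    refine (norm_sum_le _ _).trans (Finset.sum_le_sum fun w hw => ?_)
    rw [norm_smul, Real.norm_eq_abs, abs_of_nonneg (hc w hw).1]
    exact mul_le_of_le_one_left (norm_nonneg _) (hc w hw).2
  have hev : ∀ᶠ m : ℕ in Filter.atTop, ∀ v ∈ W, ∀ r ∈ D, ∀ j ∈ Finset.range (W.card + 1),
      r - j • v ∈ AddSubmonoid.closure {q | q ∈ lattZ n ∧ v + q ∈ P} →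
      SumK P m (r - j • v + m • v) := by
    rw [Filter.eventually_all_finset]
    intro v hv
    rw [Filter.eventually_all_finite hD]
    intro r _
    rw [Filter.eventually_all_finset]
    intro j _
    by_cases hq : r - j • v ∈ AddSubmonoid.closure {q | q ∈ lattZ n ∧ v + q ∈ P}
    · obtain ⟨m₀, hm⟩ := sumK_of_closure (hWE v hv).1 (hWZ v hv) _ hq
      filter_upwards [Filter.eventually_ge_atTop m₀] with m h _
      exact hm m h
    · exact Filter.Eventually.of_forall fun m h => absurd h hq
  obtain ⟨M, hM⟩ := Filter.eventually_atTop.1 hev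
  refine ⟨W.card * M + W.card + 1, fun k hk x hx hxZ => ?_⟩
  change SumK P k x
  obtain ⟨p, hp, rfl⟩ := hx
  beta_reduce at hxZ ⊢
  rw [hPW, Finset.mem_convexHull'] at hp
  obtain ⟨u, hu0, hu1, rfl⟩ := hp
  set μ : (Fin n → ℝ) → ℝ := fun w => k * u w with hμ
  have hμ0 : ∀ w ∈ W, 0 ≤ μ w := fun w hw => mul_nonneg (Nat.cast_nonneg _) (hu0 w hw)
  have hμ1 : ∑ w ∈ W, μ w = k := by rw [hμ, ← Finset.mul_sum, hu1, mul_one]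
  have hxe : (k : ℝ) • ∑ w ∈ W, u w • w = ∑ w ∈ W, μ w • w := by
    rw [Finset.smul_sum]; simp only [hμ, mul_smul]
  rw [hxe] at hxZ ⊢
  set m : (Fin n → ℝ) → ℕ := fun w => ⌊μ w⌋₊ with hm
  set c : (Fin n → ℝ) → ℝ := fun w => Int.fract (μ w) with hc
  have hsplit : ∀ w ∈ W, μ w = m w + c w := by
    intro w hw
    simp only [hm, hc]
    rw [natCast_floor_eq_intCast_floor (hμ0 w hw), Int.floor_add_fract]
  have hc0 : ∀ w, 0 ≤ c w := fun w => Int.fract_nonneg _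
  have hc1 : ∀ w, c w ≤ 1 := fun w => (Int.fract_lt_one _).le
  have hmk : (k : ℝ) = ((∑ w ∈ W, m w : ℕ) : ℝ) + ∑ w ∈ W, c w := by
    rw [← hμ1, Finset.sum_congr rfl hsplit, Finset.sum_add_distrib]; push_cast; rfl
  have hcs0 : 0 ≤ ∑ w ∈ W, c w := Finset.sum_nonneg fun w _ => hc0 w
  have hmle : ∑ w ∈ W, m w ≤ k := by
    have : ((∑ w ∈ W, m w : ℕ) : ℝ) ≤ k := by linarith
    exact_mod_cast this
  obtain ⟨j, hj⟩ := Nat.exists_eq_add_of_le hmle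
  have hjc : (j : ℝ) = ∑ w ∈ W, c w := by
    have : (k : ℝ) = ((∑ w ∈ W, m w : ℕ) : ℝ) + j := by exact_mod_cast hj
    linarith
  have hjW : j ≤ W.card := by
    have : (j : ℝ) ≤ W.card := by
      rw [hjc]
      calc _ ≤ ∑ w ∈ W, (1 : ℝ) := Finset.sum_le_sum fun w _ => hc1 w
        _ = _ := by simp
    exact_mod_cast this
  obtain ⟨v, hv, hvM⟩ : ∃ v ∈ W, M ≤ m v := by
    by_contra! hcon
    have : ∑ w ∈ W, m w ≤ W.card * M := by
      rw [← smul_eq_mul]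
      exact Finset.sum_le_card_nsmul _ _ _ fun w hw => (hcon w hw).le
    omega
  set r := ∑ w ∈ W, c w • w with hr
  have hxr : ∑ w ∈ W, μ w • w = r + ∑ w ∈ W, m w • w := by
    rw [hr, ← Finset.sum_add_distrib]
    refine Finset.sum_congr rfl fun w hw => ?_
    rw [hsplit w hw, add_smul, Nat.cast_smul_eq_nsmul, add_comm]
  have hrZ : r ∈ lattZ n := by
    have : r = (∑ w ∈ W, μ w • w) - ∑ w ∈ W, m w • w := by rw [hxr]; abel
    rw [this]
    exact sub_mem hxZ (sum_mem fun w hw => nsmul_mem (hWZ w hw) _)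
  have hrD : r ∈ D := ⟨hrZ, c, fun w _ => ⟨hc0 w, hc1 w⟩, hr⟩
  have hcl : r - j • v ∈ AddSubmonoid.closure {q | q ∈ lattZ n ∧ v + q ∈ P} := by
    apply vertex_gen V hV hP hLPE (hWE v hv) _ (sub_mem hrZ (nsmul_mem (hWZ v hv) _))
    have : r - j • v = ∑ w ∈ W, c w • (w - v) := by
      simp only [smul_sub, Finset.sum_sub_distrib]
      rw [← Finset.sum_smul, ← hjc, Nat.cast_smul_eq_nsmul]
    rw [this]
    refine sum_mem fun w hw => nnspan_smul _ (hc0 w) (Submodule.subset_span ?_)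
    simpa using (hWE w hw).1
  have h1 := hM (j + m v) (by omega) v hv r hrD j (Finset.mem_range.2 (by omega)) hcl
  have h2 := SumK.sum (P := P) (W.erase v) m id fun w hw =>
    ⟨(hWE w (Finset.mem_of_mem_erase hw)).1, hWZ w (Finset.mem_of_mem_erase hw)⟩
  have h3 := h1.add h2
  have hk' : k = j + m v + ∑ w ∈ W.erase v, m w := by
    rw [add_assoc, Finset.add_sum_erase W m hv, hj, add_comm]
  rw [hk', hxr, ← Finset.add_sum_erase W _ hv]
  convert h3 using 1
  simp only [id, add_smul]
  abel
end

section
/- Let Q ⊆ P ⊂ ℝⁿ be lattice polytopes, both having the origin 0 as a vertex (extreme point). Suppose that Q is normal and that there exists l ∈ ℕ with P ⊆ lQ. Then the additive submonoid of ℤⁿ generated by P ∩ ℤⁿ equals the additive submonoid generated by Q ∩ ℤⁿ. -/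
/-- If `Q ⊆ P` are lattice polytopes with `0` a vertex of both,
`Q` is normal and `P ⊆ lQ` for some `l ∈ ℕ`, then the additive submonoids generated
by the lattice points of `P` and of `Q` coincide. -/
theorem stmt_1 (n : ℕ) (VP VQ : Finset (Fin n → ℝ))
    (hVP : ∀ x ∈ VP, IsLatticePoint x) (hVQ : ∀ x ∈ VQ, IsLatticePoint x)
    (P Q : Set (Fin n → ℝ))
    (hP : P = convexHull ℝ (VP : Set (Fin n → ℝ)))
    (hQ : Q = convexHull ℝ (VQ : Set (Fin n → ℝ)))
    (hQP : Q ⊆ P)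
    (h0P : (0 : Fin n → ℝ) ∈ P.extremePoints ℝ)
    (h0Q : (0 : Fin n → ℝ) ∈ Q.extremePoints ℝ)
    (hQnorm : IsNormal Q)
    (l : ℕ) (hl : P ⊆ dilate l Q) :
    AddSubmonoid.closure {x | x ∈ P ∧ IsLatticePoint x} =
      AddSubmonoid.closure {x | x ∈ Q ∧ IsLatticePoint x} := by
  apply le_antisymm
  · rw [AddSubmonoid.closure_le]
    rintro x ⟨hxP, hx⟩
    rcases Nat.eq_zero_or_pos l with h | h
    · obtain ⟨y, _, hy⟩ := hl hxP
      have h0 : x = 0 := by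
        rw [← hy, h]
        simp
      rw [h0]
      exact zero_mem _
    · obtain ⟨f, hf, hxf⟩ := hQnorm l h x (hl hxP) hx
      rw [hxf]
      exact sum_mem fun i _ => AddSubmonoid.subset_closure (hf i)
  · exact AddSubmonoid.closure_mono fun x hx => ⟨hQP hx.1, hx.2⟩
end

section
/- Let b₀, …, bₙ be positive integers. Set Δ = conv(b₀e₀, …, bₙeₙ, bₙe_{n+1}) ⊂ ℝ^{n+2} and Δ̃ = conv(b₀e₀, …, bₙeₙ) ⊂ ℝ^{n+1}, where eᵢ denotes standard basis vectors. Then for every integer k ≥ 1, every lattice point of kΔ is a sum of k lattice points of Δ if and only if every lattice point of kΔ̃ is a sum of k lattice points of Δ̃. Consequently Δ is normal if and only if Δ̃ is normal, and Δ is very ample if and only if Δ̃ is very ample. -/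
/-- The simplex spanned by `cᵢeᵢ`, described by inequalities. -/
def simp0 {m : ℕ} (c : Fin m → ℝ) (k : ℝ) : Set (Fin m → ℝ) :=
  {x | (∀ i, 0 ≤ x i) ∧ ∑ i, x i / c i = k}

theorem hull_eq {m : ℕ} (c : Fin m → ℝ) (hc : ∀ i, 0 < c i) :
    convexHull ℝ (Set.range fun i => Pi.single i (c i)) = simp0 c 1 := by
  apply Set.Subset.antisymm
  · apply convexHull_min
    · rintro _ ⟨i, rfl⟩
      refine ⟨fun j => ?_, ?_⟩
      · by_cases h : j = i
        · subst h; simp [(hc j).le]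
        · simp [h]
      · simp [Pi.single_apply, ite_div, (hc _).ne']
    · rintro x ⟨hx, hx1⟩ y ⟨hy, hy1⟩ a b ha hb hab
      refine ⟨fun j => ?_, ?_⟩
      · have := hx j; have := hy j
        simp only [Pi.add_apply, Pi.smul_apply, smul_eq_mul]; positivity
      · simp only [Pi.add_apply, Pi.smul_apply, smul_eq_mul, add_div, mul_div_assoc,
          Finset.sum_add_distrib, ← Finset.mul_sum, hx1, hy1, mul_one, hab]
  · rintro x ⟨hx, hx1⟩
    have h := (convex_convexHull ℝ (Set.range fun i => (Pi.single i (c i) : Fin m → ℝ))).sum_mem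
      (t := Finset.univ) (w := fun i => x i / c i) (z := fun i => Pi.single i (c i))
      (fun i _ => div_nonneg (hx i) (hc i).le) hx1
      (fun i _ => subset_convexHull ℝ _ ⟨i, rfl⟩)
    convert h using 1
    funext j
    simp [Finset.sum_apply, Pi.single_apply, (hc _).ne']

theorem dilate_eq {m : ℕ} (c : Fin m → ℝ) (k : ℕ) (hk : 1 ≤ k) :
    dilate k (simp0 c 1) = simp0 c k := by
  have hk0 : (0 : ℝ) < k := by exact_mod_cast hk
  apply Set.Subset.antisymm
  · rintro _ ⟨x, ⟨hx, hx1⟩, rfl⟩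
    refine ⟨fun j => ?_, ?_⟩
    · have := hx j
      simp only [Pi.smul_apply, smul_eq_mul]; positivity
    · simp only [Pi.smul_apply, smul_eq_mul, mul_div_assoc, ← Finset.mul_sum, hx1, mul_one]
  · rintro x ⟨hx, hx1⟩
    refine ⟨(k : ℝ)⁻¹ • x, ⟨fun j => ?_, ?_⟩, ?_⟩
    · have := hx j
      simp only [Pi.smul_apply, smul_eq_mul]; positivity
    · simp only [Pi.smul_apply, smul_eq_mul, mul_div_assoc, ← Finset.mul_sum, hx1]
      exact inv_mul_cancel₀ hk0.ne'
    · simp [smul_smul, hk0.ne']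

theorem split_sum (k : ℕ) : ∀ (u : Fin k → ℤ) (t : ℤ), (∀ i, 0 ≤ u i) → 0 ≤ t → t ≤ ∑ i, u i →
    ∃ a : Fin k → ℤ, (∀ i, 0 ≤ a i ∧ a i ≤ u i) ∧ ∑ i, a i = t := by
  induction k with
  | zero =>
    intro u t _ h0 h1
    refine ⟨fun _ => 0, fun i => i.elim0, ?_⟩
    simp at h1 ⊢
    omega
  | succ k ih =>
    intro u t hu h0 h1
    rw [Fin.sum_univ_succ] at h1
    have hs : 0 ≤ ∑ i : Fin k, u i.succ := Finset.sum_nonneg fun i _ => hu _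
    have hu0 := hu 0
    obtain ⟨a, ha, hs⟩ := ih (fun i => u i.succ) (t - min t (u 0)) (fun i => hu _)
      (by omega) (by omega)
    refine ⟨Fin.cons (min t (u 0)) a, fun i => ?_, ?_⟩
    · refine Fin.cases ?_ (fun i => ?_) i
      · simp only [Fin.cons_zero]; omega
      · simpa using ha i
    · simp [Fin.sum_univ_succ, hs]

/-- Merge the last two coordinates. -/
def fold {n : ℕ} (y : Fin (n + 2) → ℝ) : Fin (n + 1) → ℝ :=
  fun j => y j.castSucc + if j = Fin.last n then y (Fin.last (n + 1)) else 0

/-- Repeat the last weight. -/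
def rep {n : ℕ} (c : Fin (n + 1) → ℝ) : Fin (n + 2) → ℝ :=
  Fin.snoc (α := fun _ => ℝ) c (c (Fin.last n))

theorem fold_sum {n : ℕ} (c : Fin (n + 1) → ℝ) (y : Fin (n + 2) → ℝ) :
    ∑ i, fold y i / c i = ∑ i, y i / rep c i := by
  rw [Fin.sum_univ_castSucc (n := n + 1)]
  simp [fold, rep, add_div, Finset.sum_add_distrib, ite_div]

theorem fold_mem {n : ℕ} (c : Fin (n + 1) → ℝ) (k : ℝ) (y : Fin (n + 2) → ℝ)
    (hy : y ∈ simp0 (rep c) k) : fold y ∈ simp0 c k := by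
  refine ⟨fun j => ?_, (fold_sum c y).trans hy.2⟩
  unfold fold
  have h1 := hy.1 j.castSucc
  have h2 := hy.1 (Fin.last _)
  split_ifs <;> linarith

theorem fold_lat {n : ℕ} (y : Fin (n + 2) → ℝ)
    (hy : IsLatticePoint y) : IsLatticePoint (fold y) := by
  intro j
  obtain ⟨p, hp⟩ := hy j.castSucc
  obtain ⟨q, hq⟩ := hy (Fin.last _)
  unfold fold
  rw [hp, hq]
  split_ifs
  · exact ⟨p + q, by push_cast; rfl⟩
  · exact ⟨p, by simp⟩

theorem idp_iff {n : ℕ} (c : Fin (n + 1) → ℝ) (k : ℕ) (hk : 1 ≤ k) :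
    IsIDP k (simp0 (rep c) 1) ↔ IsIDP k (simp0 c 1) := by
  unfold IsIDP
  rw [dilate_eq _ _ hk, dilate_eq _ _ hk]
  constructor
  · intro H x hx hl
    have hf : fold (Fin.snoc (α := fun _ => ℝ) x 0) = x := by
      funext j; simp [fold]
    obtain ⟨f, hf1, hf2⟩ := H (Fin.snoc (α := fun _ => ℝ) x 0) (by
      refine ⟨fun j => ?_, ?_⟩
      · refine Fin.lastCases ?_ (fun j => ?_) j
        · simp
        · simpa using hx.1 j
      · rw [← fold_sum, hf]; exact hx.2) (by
      intro j
      refine Fin.lastCases ?_ (fun j => ?_) j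
      · exact ⟨0, by simp⟩
      · simpa using hl j)
    refine ⟨fun i => fold (f i), fun i => ⟨fold_mem c 1 _ (hf1 i).1, fold_lat _ (hf1 i).2⟩, ?_⟩
    rw [← hf, hf2]
    funext j
    by_cases h : j = Fin.last n <;> simp [fold, h, Finset.sum_add_distrib]
  · intro H y hy hl
    obtain ⟨g, hg1, hg2⟩ := H (fold y) (fold_mem c k y hy) (fold_lat y hl)
    choose u hu using fun i => (hg1 i).2 (Fin.last n)
    obtain ⟨t, ht⟩ := hl (Fin.last (n + 1))
    have hlast := congrFun hg2 (Fin.last n)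
    simp only [fold, if_true, Finset.sum_apply, hu] at hlast
    obtain ⟨a, ha, hsa⟩ := split_sum k u t
      (fun i => by have := (hg1 i).1.1 (Fin.last n); rw [hu] at this; exact_mod_cast this)
      (by have := hy.1 (Fin.last (n + 1)); rw [ht] at this; exact_mod_cast this)
      (by
        have h1 := hy.1 (Fin.last n).castSucc
        have : (t : ℝ) ≤ ∑ i, (u i : ℝ) := by rw [← hlast, ← ht]; linarith
        exact_mod_cast this)
    have hsa' : ∑ i, (a i : ℝ) = t := by exact_mod_cast hsa
    let f : Fin k → Fin (n + 2) → ℝ := fun i =>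
      Fin.snoc (α := fun _ => ℝ) (fun j => g i j - if j = Fin.last n then (a i : ℝ) else 0) (a i)
    have hfold : ∀ i, fold (f i) = g i := by
      intro i; funext j; simp [fold, f]
    refine ⟨f, fun i => ⟨⟨fun j => ?_, ?_⟩, fun j => ?_⟩, ?_⟩
    · refine Fin.lastCases ?_ (fun j => ?_) j
      · simpa [f] using (ha i).1
      · simp only [f, Fin.snoc_castSucc]
        split_ifs with h
        · subst h
          rw [hu, sub_nonneg]; exact_mod_cast (ha i).2
        · simpa using (hg1 i).1.1 j
    · rw [← fold_sum, hfold]; exact (hg1 i).1.2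
    · refine Fin.lastCases ?_ (fun j => ?_) j
      · exact ⟨a i, by simp [f]⟩
      · obtain ⟨p, hp⟩ := (hg1 i).2 j
        simp only [f, Fin.snoc_castSucc, hp]
        split_ifs
        · exact ⟨p - a i, by push_cast; rfl⟩
        · exact ⟨p, by simp⟩
    · funext j
      refine Fin.lastCases ?_ (fun j => ?_) j
      · simp [f, hsa', ht]
      · have := congrFun hg2 j
        simp only [Finset.sum_apply, f, Fin.snoc_castSucc, Finset.sum_sub_distrib] at this ⊢
        rw [← this]
        by_cases h : j = Fin.last n <;> simp [fold, h, hsa', ht]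

/-- repeated weights. For positive integers `b₀, …, bₙ`, let
`Δ = conv(b₀e₀, …, bₙeₙ, bₙe_{n+1}) ⊂ ℝ^{n+2}` and
`Δ' = conv(b₀e₀, …, bₙeₙ) ⊂ ℝ^{n+1}`. Then for every `k ≥ 1`, `kΔ` satisfies the
IDP property iff `kΔ'` does; consequently `Δ` is normal iff `Δ'` is normal, and
`Δ` is very ample iff `Δ'` is very ample. -/
theorem stmt_2 (n : ℕ) (b : Fin (n + 1) → ℕ) (hb : ∀ i, 0 < b i) :
    (∀ k : ℕ, 1 ≤ k →
      (IsIDP k (convexHull ℝ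
          ((Set.range fun i : Fin (n + 1) => Pi.single i.castSucc ((b i : ℝ))) ∪
            {Pi.single (Fin.last (n + 1)) ((b (Fin.last n) : ℝ))})) ↔
        IsIDP k (convexHull ℝ
          (Set.range fun i : Fin (n + 1) => Pi.single i ((b i : ℝ)))))) ∧
    (IsNormal (convexHull ℝ
        ((Set.range fun i : Fin (n + 1) => Pi.single i.castSucc ((b i : ℝ))) ∪
          {Pi.single (Fin.last (n + 1)) ((b (Fin.last n) : ℝ))})) ↔
      IsNormal (convexHull ℝ
        (Set.range fun i : Fin (n + 1) => Pi.single i ((b i : ℝ))))) ∧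
    (IsVeryAmple (convexHull ℝ
        ((Set.range fun i : Fin (n + 1) => Pi.single i.castSucc ((b i : ℝ))) ∪
          {Pi.single (Fin.last (n + 1)) ((b (Fin.last n) : ℝ))})) ↔
      IsVeryAmple (convexHull ℝ
        (Set.range fun i : Fin (n + 1) => Pi.single i ((b i : ℝ))))) := by
  have e1 : convexHull ℝ (Set.range fun i : Fin (n + 1) =>
      (Pi.single i ((b i : ℝ)) : Fin (n + 1) → ℝ)) = simp0 (fun i => (b i : ℝ)) 1 :=
    hull_eq _ fun i => by exact_mod_cast hb i
  have e2 : convexHull ℝ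
          ((Set.range fun i : Fin (n + 1) =>
              (Pi.single i.castSucc ((b i : ℝ)) : Fin (n + 2) → ℝ)) ∪
            {Pi.single (Fin.last (n + 1)) ((b (Fin.last n) : ℝ))}) =
      simp0 (rep fun i => (b i : ℝ)) 1 := by
    rw [← hull_eq]
    · congr 1
      ext x
      simp only [Set.mem_union, Set.mem_range, Set.mem_singleton_iff]
      constructor
      · rintro (⟨i, rfl⟩ | rfl)
        · exact ⟨i.castSucc, by simp [rep]⟩
        · exact ⟨Fin.last _, by simp [rep]⟩
      · rintro ⟨i, rfl⟩
        refine Fin.lastCases ?_ (fun j => ?_) i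
        · right; simp [rep]
        · left; exact ⟨j, by simp [rep]⟩
    · intro i
      refine Fin.lastCases ?_ (fun j => ?_) i
      · simpa [rep] using hb _
      · simpa [rep] using hb _
  rw [e1, e2]
  have key := fun k hk => idp_iff (fun i => (b i : ℝ)) k hk
  refine ⟨key, forall₂_congr key, ?_, ?_⟩
  · rintro ⟨k₀, h⟩
    exact ⟨max k₀ 1, fun k hk => (key k (by omega)).1 (h k (by omega))⟩
  · rintro ⟨k₀, h⟩
    exact ⟨max k₀ 1, fun k hk => (key k (by omega)).2 (h k (by omega))⟩
end

section
/- Let a₀, …, aₙ be positive integers such that gcd(aᵢ, aⱼ) = 1 whenever aᵢ ≠ aⱼ. Then the associated simplex Δ_{a,l} ⊂ ℝ^{n+1} is very ample. (Equivalently, every ample line bundle on the weighted projective space ℙ(a₀, …, aₙ) is very ample, i.e. μ_VA(ℙ(a₀,…,aₙ)) = 1.) -/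
section aux
variable {ι : Type*} [Fintype ι] [DecidableEq ι]

/-- total weight -/
def wtAux (a : ι → ℕ) (x : ι → ℕ) : ℕ := ∑ j, a j * x j

/-- number of items -/
def cntAux (x : ι → ℕ) : ℕ := ∑ j, x j

lemma wtAux_add (a x y : ι → ℕ) : wtAux a (x + y) = wtAux a x + wtAux a y := by
  simp [wtAux, mul_add, Finset.sum_add_distrib]

lemma cntAux_add (x y : ι → ℕ) : cntAux (x + y) = cntAux x + cntAux y := by
  simp [cntAux, Finset.sum_add_distrib]

lemma wtAux_single (a : ι → ℕ) (i : ι) (N : ℕ) : wtAux a (Pi.single i N) = a i * N := by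
  simp [wtAux, Pi.single_apply]

lemma cntAux_single (i : ι) (N : ℕ) : cntAux (Pi.single i N : ι → ℕ) = N := by
  simp [cntAux, Pi.single_apply]

lemma cntAux_eq_zero (x : ι → ℕ) : cntAux x = 0 ↔ x = 0 := by
  simp [cntAux, funext_iff]

lemma wtAux_le (a : ι → ℕ) (l : ℕ) (h : ∀ j, a j ≤ l) (x : ι → ℕ) :
    wtAux a x ≤ l * cntAux x := by
  unfold wtAux cntAux
  rw [Finset.mul_sum]
  exact Finset.sum_le_sum fun j _ => Nat.mul_le_mul_right _ (h j)

lemma exists_sum_aux (x y : ι → ℕ) (h : x ≤ y) : ∃ w, y = x + w :=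
  ⟨y - x, by
           funext j
           have h1 : x j ≤ y j := h j
           simp only [Pi.add_apply, Pi.sub_apply]; omega⟩

lemma single_le_of_ne (z : ι → ℕ) (j : ι) (h : z j ≠ 0) : (Pi.single j 1 : ι → ℕ) ≤ z := by
  intro t
  by_cases ht : t = j
  · subst ht; simp; omega
  · simp [Pi.single_apply, ht]

lemma chain_aux (m : ℕ) : ∀ z : ι → ℕ, cntAux z = m →
    ∃ v : ℕ → ι → ℕ, Monotone v ∧ (∀ s ≤ m, cntAux (v s) = s) ∧ ∀ s, v s ≤ z := by
  induction m with
  | zero =>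
    intro z hz
    refine ⟨fun _ => z, fun _ _ _ => le_rfl, ?_, fun _ => le_rfl⟩
    intro s hs
    have : s = 0 := by omega
    simp [hz, this]
  | succ m ih =>
    intro z hz
    have hne : z ≠ 0 := by
      intro h
      rw [(cntAux_eq_zero z).2 h] at hz
      omega
    obtain ⟨j, hj⟩ := Function.ne_iff.1 hne
    obtain ⟨w, hw⟩ := exists_sum_aux _ _ (single_le_of_ne z j hj)
    have hcw : cntAux w = m := by
      rw [hw, cntAux_add, cntAux_single] at hz
      omega
    obtain ⟨v, hv1, hv2, hv3⟩ := ih w hcw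
    have hwz : w ≤ z := by rw [hw]; exact le_add_of_nonneg_left (zero_le)
    refine ⟨fun s => if s ≤ m then v s else z, ?_, ?_, ?_⟩
    · intro s t hst
      dsimp only
      split_ifs with h1 h2
      · exact hv1 hst
      · exact (hv3 s).trans hwz
      · omega
      · exact le_rfl
    · intro s hs
      dsimp only
      split_ifs with h1
      · exact hv2 s h1
      · rw [hz]; omega
    · intro s
      dsimp only
      split_ifs with h1
      · exact (hv3 s).trans hwz
      · exact le_rfl

lemma zerosum_aux (a : ι → ℕ) (l : ℕ) (i : ι) (hi : 0 < a i) (hil : a i ≤ l)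
    (hl : ∀ j, a j ≠ a i → a i * a j ≤ l) (z : ι → ℕ) (hz : z ≠ 0) (hd : a i ∣ wtAux a z) :
    ∃ w, w ≤ z ∧ w ≠ 0 ∧ a i ∣ wtAux a w ∧ wtAux a w ≤ l := by
  by_cases hex : ∃ j, z j ≠ 0 ∧ a j = a i
  · obtain ⟨j, hj, hji⟩ := hex
    refine ⟨Pi.single j 1, single_le_of_ne z j hj, by simp, ?_, ?_⟩
    · rw [wtAux_single, hji]; simp
    · rw [wtAux_single, hji]; simpa using hil
  · push Not at hex
    have key : ∀ w, w ≤ z → cntAux w ≤ a i → wtAux a w ≤ l := by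
      intro w hw hc
      have h1 : a i * wtAux a w ≤ l * cntAux w := by
        unfold wtAux cntAux
        rw [Finset.mul_sum, Finset.mul_sum]
        refine Finset.sum_le_sum fun j _ => ?_
        by_cases hwj : w j = 0
        · simp [hwj]
        · have : z j ≠ 0 := by
                              have h1 : w j ≤ z j := hw j
                              omega
          rw [← mul_assoc]
          exact Nat.mul_le_mul_right _ (hl j (hex j this))
      have h2 : a i * wtAux a w ≤ a i * l := by
        calc _ ≤ _ := h1
          _ ≤ l * a i := Nat.mul_le_mul_left _ hc
          _ = _ := mul_comm _ _
      exact Nat.le_of_mul_le_mul_left h2 hi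
    by_cases hc : cntAux z ≤ a i
    · exact ⟨z, le_rfl, hz, hd, key z le_rfl hc⟩
    · obtain ⟨v, hv1, hv2, hv3⟩ := chain_aux (cntAux z) z rfl
      obtain ⟨s, hs, t, ht, hst, heq⟩ := Finset.exists_ne_map_eq_of_card_lt_of_maps_to
        (s := Finset.range (a i + 1)) (t := Finset.range (a i))
        (f := fun s => wtAux a (v s) % a i) (by simp)
        (by intro s _; simp [Nat.mod_lt _ hi])
      wlog hlt : s < t generalizing s t
      · exact this t ht s hs (Ne.symm hst) heq.symm (by omega)
      simp only [Finset.mem_range] at hs ht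
      obtain ⟨w, hw⟩ := exists_sum_aux _ _ (hv1 hlt.le)
      have hcw : s + cntAux w = t := by
        have := hv2 t (by omega)
        rw [hw, cntAux_add, hv2 s (by omega)] at this
        exact this
      have hwz : w ≤ z := by
        refine le_trans ?_ (hv3 t)
        rw [hw]; exact le_add_of_nonneg_left (zero_le)
      refine ⟨w, hwz, ?_, ?_, key w hwz (by omega)⟩
      · intro h
        rw [(cntAux_eq_zero w).2 h] at hcw
        omega
      · rw [hw, wtAux_add] at heq
        have h3 : wtAux a (v s) + 0 ≡ wtAux a (v s) + wtAux a w [MOD a i] := heq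
        exact (Nat.modEq_zero_iff_dvd).1 (Nat.ModEq.add_left_cancel' _ h3).symm

lemma fill_aux (a : ι → ℕ) (l : ℕ) (i : ι) (hi : 0 < a i) (hil : a i ∣ l) (hl0 : 0 < l)
    (hle : ∀ j, a j ≤ l)
    (hl : ∀ j, a j ≠ a i → a i * a j ≤ l) (m : ℕ) : ∀ (z : ι → ℕ) (N k : ℕ), cntAux z = m →
    wtAux a z + a i * N = k * l → cntAux z ≤ k →
    z + Pi.single i N ∈ AddSubmonoid.closure {y : ι → ℕ | wtAux a y = l} := by
  induction m using Nat.strong_induction_on with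
  | _ m ih =>
  intro z N k hm hw hk
  obtain ⟨c, hc⟩ := hil
  by_cases hz : z = 0
  · subst hz
    have h0 : wtAux a (0 : ι → ℕ) = 0 := by simp [wtAux]
    rw [h0, zero_add] at hw
    have hN : N = k * c := by
      apply Nat.eq_of_mul_eq_mul_left hi
      rw [hw, hc]; ring
    have : (0 : ι → ℕ) + Pi.single i N = k • Pi.single i c := by
      rw [zero_add, ← Pi.single_smul]; simp [hN]
    rw [this]
    apply AddSubmonoid.nsmul_mem
    apply AddSubmonoid.subset_closure
    simp [wtAux_single, hc]
  · have hd : a i ∣ wtAux a z := by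
      have h1 : a i ∣ k * l := by rw [hc]; exact Dvd.intro (k * c) (by ring)
      rw [← hw] at h1
      exact (Nat.dvd_add_left (Dvd.intro _ rfl)).1 h1
    obtain ⟨w, hwz, hw0, ⟨t, ht⟩, hwl⟩ :=
      zerosum_aux a l i hi (Nat.le_of_dvd hl0 ⟨c, hc⟩) hl z hz hd
    obtain ⟨u, hu⟩ := exists_sum_aux _ _ hwz
    have hcw : cntAux w ≠ 0 := fun h => hw0 ((cntAux_eq_zero w).1 h)
    have hcu : cntAux z = cntAux w + cntAux u := by rw [hu, cntAux_add]
    have hwu : wtAux a z = wtAux a w + wtAux a u := by rw [hu, wtAux_add]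
    obtain ⟨k', rfl⟩ : ∃ k', k = k' + 1 := ⟨k - 1, by omega⟩
    have hub : wtAux a u ≤ k' * l := by
      calc _ ≤ l * cntAux u := wtAux_le a l hle u
        _ ≤ l * k' := Nat.mul_le_mul_left _ (by omega)
        _ = _ := mul_comm _ _
    have htc : t ≤ c := by
      apply Nat.le_of_mul_le_mul_left _ hi
      rw [← ht, ← hc]; exact hwl
    obtain ⟨d, rfl⟩ := Nat.exists_eq_add_of_le htc
    rw [mul_add, ← ht] at hc
    have hdN : d ≤ N := by
      apply Nat.le_of_mul_le_mul_left _ hi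
      rw [add_mul, one_mul] at hw
      omega
    obtain ⟨N', rfl⟩ := Nat.exists_eq_add_of_le hdN
    have : z + Pi.single i (d + N') = (w + Pi.single i d) + (u + Pi.single i N') := by
      rw [hu, Pi.single_add]; abel
    rw [this]
    apply AddSubmonoid.add_mem
    · apply AddSubmonoid.subset_closure
      simp only [Set.mem_ofPred_eq, wtAux_add, wtAux_single]
      exact hc.symm
    · refine ih (cntAux u) (by omega) u N' k' rfl ?_ (by omega)
      rw [add_mul, one_mul, mul_add] at hw
      omega

lemma main_aux (a : ι → ℕ) (l : ℕ) (hpos : ∀ i, 0 < a i) (hl0 : 0 < l)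
    (hdvd : ∀ j, a j ∣ l) [Nonempty ι]
    (hl : ∀ i j, a j ≠ a i → a i * a j ≤ l) (x : ι → ℕ) (k : ℕ)
    (hk : Fintype.card ι * (Fintype.card ι * l) ≤ k) (hx : wtAux a x = k * l) :
    x ∈ AddSubmonoid.closure {y : ι → ℕ | wtAux a y = l} := by
  obtain ⟨i, hi⟩ : ∃ i, (Fintype.card ι * l) * l ≤ a i * x i := by
    by_contra! h
    have h1 : wtAux a x < ∑ _j : ι, (Fintype.card ι * l) * l :=
      Finset.sum_lt_sum_of_nonempty Finset.univ_nonempty fun j _ => h j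
    rw [hx] at h1
    simp only [Finset.sum_const, Finset.card_univ, smul_eq_mul] at h1
    rw [← mul_assoc] at h1
    have := Nat.mul_le_mul_right l hk
    omega
  choose L hL using hdvd
  have hLpos : ∀ j, 0 < L j := fun j => by
    rcases Nat.eq_zero_or_pos (L j) with h | h
    · have := hL j; rw [h] at this; omega
    · exact h
  let q : ι → ℕ := fun j => if j = i then 0 else x j / L j
  let r : ι → ℕ := fun j => if j = i then 0 else x j % L j
  have hdec : x = ∑ j, q j • (Pi.single j (L j) : ι → ℕ) + (r + Pi.single i (x i)) := by
    funext t
    simp only [Pi.add_apply, Finset.sum_apply, Pi.smul_apply, Pi.single_apply, smul_eq_mul,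
      mul_ite, mul_zero, Finset.sum_ite_eq, Finset.mem_univ, if_true, q, r]
    by_cases h : t = i
    · subst h; simp
    · simp [h, Nat.div_add_mod']
  have hmem : ∀ j, (Pi.single j (L j) : ι → ℕ) ∈
      AddSubmonoid.closure {y : ι → ℕ | wtAux a y = l} := fun j => by
    apply AddSubmonoid.subset_closure
    simp [wtAux_single, ← hL j]
  have hwq : wtAux a (∑ j, q j • (Pi.single j (L j) : ι → ℕ)) = (∑ j, q j) * l := by
    unfold wtAux
    simp only [Finset.sum_apply, Pi.smul_apply, Pi.single_apply, smul_eq_mul,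
      mul_ite, mul_zero, Finset.sum_ite_eq, Finset.mem_univ, if_true]
    rw [Finset.sum_mul]
    refine Finset.sum_congr rfl fun j _ => ?_
    conv_rhs => rw [hL j]
    ring
  have hw : (∑ j, q j) * l + (wtAux a r + a i * x i) = k * l := by
    rw [← hx]
    conv_rhs => rw [hdec]
    rw [wtAux_add, hwq, wtAux_add, wtAux_single]
  have hQ : ∑ j, q j ≤ k := by
    apply Nat.le_of_mul_le_mul_right _ hl0
    omega
  obtain ⟨k', hk'⟩ := Nat.exists_eq_add_of_le hQ
  have hw' : wtAux a r + a i * x i = k' * l := by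
    rw [hk', add_mul] at hw
    omega
  have hr : cntAux r ≤ Fintype.card ι * l := by
    unfold cntAux
    rw [← smul_eq_mul, ← Finset.card_univ]
    refine Finset.sum_le_card_nsmul _ _ _ fun j _ => ?_
    simp only [r]
    split_ifs
    · exact Nat.zero_le _
    · refine (Nat.mod_lt _ (hLpos j)).le.trans ?_
      rw [hL j]
      exact Nat.le_mul_of_pos_left _ (hpos j)
  have hk'' : Fintype.card ι * l ≤ k' := by
    apply Nat.le_of_mul_le_mul_right _ hl0
    omega
  rw [hdec]
  apply AddSubmonoid.add_mem
  · exact AddSubmonoid.sum_mem _ fun j _ => AddSubmonoid.nsmul_mem _ (hmem j) _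
  · exact fill_aux a l i (hpos i) ⟨L i, hL i⟩ hl0
      (fun j => Nat.le_of_dvd hl0 ⟨L j, hL j⟩) (hl i) _ r (x i) k' rfl hw' (hr.trans hk'')

end aux

/-- If any two distinct weights `aᵢ ≠ aⱼ` are coprime, then with
`l = lcm(a₀, …, aₙ)` the simplex `Δ_{a,l} = conv((l/a₀)e₀, …, (l/aₙ)eₙ) ⊂ ℝ^{n+1}`
is very ample. -/
theorem stmt_3 (n : ℕ) (a : Fin (n + 1) → ℕ) (ha : ∀ i, 0 < a i)
    (hcop : ∀ i j, a i ≠ a j → Nat.gcd (a i) (a j) = 1) :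
    IsVeryAmple (convexHull ℝ
      (Set.range fun i : Fin (n + 1) =>
        Pi.single i ((Finset.univ.lcm a / a i : ℕ) : ℝ))) := by
  set l := Finset.univ.lcm a with hldef
  have hdvd : ∀ j, a j ∣ l := fun j => Finset.dvd_lcm (Finset.mem_univ j)
  have hl0 : 0 < l := by
    apply Nat.pos_of_ne_zero
    rw [hldef, Ne, Finset.lcm_eq_zero_iff]
    rintro ⟨j, -, hj⟩
    exact (ha j).ne' hj
  have hlR : (0 : ℝ) < l := by exact_mod_cast hl0
  have haR : ∀ j, (0 : ℝ) < a j := fun j => by exact_mod_cast ha j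
  have hcast : ∀ j, (a j : ℝ) * ((l / a j : ℕ) : ℝ) = l := fun j => by
    rw [← Nat.cast_mul, Nat.mul_div_cancel' (hdvd j)]
  have hl : ∀ i j, a j ≠ a i → a i * a j ≤ l := fun i j h =>
    Nat.le_of_dvd hl0 (Nat.Coprime.mul_dvd_of_dvd_of_dvd (hcop i j h.symm) (hdvd i) (hdvd j))
  set P : Set (Fin (n + 1) → ℝ) := convexHull ℝ
      (Set.range fun i : Fin (n + 1) => Pi.single i ((l / a i : ℕ) : ℝ)) with hP
  -- points of the simplex satisfy the defining (in)equalities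
  have hsub : ∀ y ∈ P, (∀ j, 0 ≤ y j) ∧ ∑ j, (a j : ℝ) * y j = l := by
    have : P ⊆ {y | (∀ j, 0 ≤ y j) ∧ ∑ j, (a j : ℝ) * y j = l} := by
      apply convexHull_min
      · rintro _ ⟨i, rfl⟩
        refine ⟨fun j => ?_, ?_⟩
        · simp only [Pi.single_apply]
          split_ifs <;> positivity
        · simp only [Pi.single_apply, mul_ite, mul_zero, Finset.sum_ite_eq', Finset.mem_univ,
            if_true]
          exact hcast i
      · rintro y ⟨hy1, hy2⟩ z ⟨hz1, hz2⟩ s t hs ht hst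
        refine ⟨fun j => ?_, ?_⟩
        · have := hy1 j
          have := hz1 j
          simp only [Pi.add_apply, Pi.smul_apply, smul_eq_mul]
          positivity
        · have : ∑ j, (a j : ℝ) * (s • y + t • z) j =
              s * ∑ j, (a j : ℝ) * y j + t * ∑ j, (a j : ℝ) * z j := by
            rw [Finset.mul_sum, Finset.mul_sum, ← Finset.sum_add_distrib]
            refine Finset.sum_congr rfl fun j _ => ?_
            simp only [Pi.add_apply, Pi.smul_apply, smul_eq_mul]
            ring
          rw [this, hy2, hz2, ← add_mul, hst, one_mul]
    exact fun y hy => this hy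
  have hmemP : ∀ y : Fin (n + 1) → ℕ, wtAux a y = l → (fun j => (y j : ℝ)) ∈ P := by
    intro y hy
    have hyR : ∑ j, (a j : ℝ) * (y j : ℝ) = l := by
      rw [← hy]; simp [wtAux]
    have h1 : (fun j => (y j : ℝ)) = ∑ i : Fin (n + 1), ((a i : ℝ) * y i / l) •
        (Pi.single i ((l / a i : ℕ) : ℝ) : Fin (n + 1) → ℝ) := by
      funext t
      simp only [Finset.sum_apply, Pi.smul_apply, Pi.single_apply, smul_eq_mul,
        mul_ite, mul_zero, Finset.sum_ite_eq, Finset.mem_univ, if_true]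
      have := hcast t
      rw [div_mul_eq_mul_div, eq_div_iff hlR.ne', ← this]
      ring
    rw [h1]
    refine (convex_convexHull ℝ _).sum_mem (fun i _ => by positivity) ?_
      (fun i _ => subset_convexHull ℝ _ ⟨i, rfl⟩)
    rw [← Finset.sum_div, hyR, div_self hlR.ne']
  refine ⟨(n + 1) * ((n + 1) * l), ?_⟩
  rintro k hk _ ⟨p, hp, rfl⟩ hlat
  obtain ⟨hp1, hp2⟩ := hsub p hp
  have hnat : ∀ j, ∃ m : ℕ, ((k : ℝ) • p) j = (m : ℝ) := by
    intro j
    obtain ⟨z, hz⟩ := hlat j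
    have h0 : (0 : ℝ) ≤ z := by
      rw [← hz]
      have := hp1 j
      simp only [Pi.smul_apply, smul_eq_mul]
      positivity
    have h0' : 0 ≤ z := by exact_mod_cast h0
    obtain ⟨m, rfl⟩ := Int.eq_ofNat_of_zero_le h0'
    exact ⟨m, by simpa using hz⟩
  choose x hx using hnat
  have hwx : wtAux a x = k * l := by
    have : ((wtAux a x : ℕ) : ℝ) = ((k * l : ℕ) : ℝ) := by
      unfold wtAux
      push_cast
      rw [← hp2, Finset.mul_sum]
      refine Finset.sum_congr rfl fun j _ => ?_
      rw [← hx j]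
      simp only [Pi.smul_apply, smul_eq_mul]
      ring
    exact_mod_cast this
  have hmem := main_aux a l ha hl0 hdvd hl x k (by simpa using hk) hwx
  obtain ⟨s, hs, hsum⟩ := AddSubmonoid.exists_list_of_mem_closure hmem
  have hlen : s.length = k := by
    have h2 : ∀ s : List (Fin (n + 1) → ℕ), (∀ y ∈ s, wtAux a y = l) →
        wtAux a s.sum = s.length * l := by
      intro s
      induction s with
      | nil => intro _; simp [wtAux]
      | cons b s ih =>
        intro h
        rw [List.sum_cons, wtAux_add, ih fun y hy => h y (List.mem_cons_of_mem _ hy),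
          h b List.mem_cons_self, List.length_cons]
        ring
    have h3 := h2 s hs
    rw [hsum, hwx] at h3
    exact (Nat.eq_of_mul_eq_mul_right hl0 h3).symm
  subst hlen
  refine ⟨fun t j => (s.get t j : ℝ), fun t => ⟨hmemP _ (hs _ (List.get_mem _ _)),
    fun j => ⟨(s.get t j : ℤ), by simp⟩⟩, ?_⟩
  funext j
  rw [Finset.sum_apply]
  refine (hx j).trans ?_
  rw [← hsum, ← Nat.cast_sum]
  congr 1
  have h4 : s.sum = ∑ t, s.get t := by
    simp [Fin.sum_univ_getElem]
  rw [h4, Finset.sum_apply]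
end

section
/- Let a₀, …, aₙ be positive integers taking at most 3 distinct values (i.e. the set {a₀, …, aₙ} has at most 3 elements). Then the associated simplex Δ_{a,l} ⊂ ℝ^{n+1} is normal. (Equivalently, any weighted projective space with no more than 3 distinct weights has very ample index 1, and every embedding in a complete linear system is projectively normal.) -/
/-- Splitting property for three weights. -/
def SplitP (a b c l : ℕ) : Prop :=
  ∀ k X Y Z : ℕ, a * X + b * Y + c * Z = (k + 1) * l →
    ∃ X' Y' Z' : ℕ, X' ≤ X ∧ Y' ≤ Y ∧ Z' ≤ Z ∧ a * X' + b * Y' + c * Z' = l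

theorem SplitP.swap {a b c l : ℕ} (h : SplitP a b c l) : SplitP b a c l := by
  intro k X Y Z e
  obtain ⟨X', Y', Z', h1, h2, h3, h4⟩ := h k Y X Z (by linarith)
  exact ⟨Y', X', Z', h2, h1, h3, by linarith⟩

theorem SplitP.rot {a b c l : ℕ} (h : SplitP a b c l) : SplitP b c a l := by
  intro k X Y Z e
  obtain ⟨X', Y', Z', h1, h2, h3, h4⟩ := h k Z X Y (by linarith)
  exact ⟨Y', Z', X', h2, h3, h1, by linarith⟩

theorem core_aux (a b c X Y Z : ℕ) (ha : 0 < a) (hb : 0 < b) (hc : 0 < c)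
    (e : a * X + b * Y + c * Z = 2 * (a * b * c)) (hY : Y < a * c) (hZ : Z < a * b)
    (hX : 2 * X < b * c) :
    ∃ X' Y' Z' : ℕ, X' ≤ X ∧ Y' ≤ Y ∧ Z' ≤ Z ∧ a * X' + b * Y' + c * Z' = a * b * c := by
  have hbc : 0 < b * c := Nat.mul_pos hb hc
  rcases Nat.lt_or_ge a 2 with h | h
  · obtain rfl : a = 1 := by omega
    simp only [one_mul] at *
    have h1 : b * (Y + 1) ≤ b * c := Nat.mul_le_mul_left b hY
    have h2 : c * (Z + 1) ≤ c * b := Nat.mul_le_mul_left c hZ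
    have h3 : c * b = b * c := mul_comm _ _
    rw [mul_add] at h1 h2
    have hd := Nat.div_add_mod (b * c - b * Y) c
    have hm := Nat.mod_lt (b * c - b * Y) hc
    refine ⟨(b * c - b * Y) % c, Y, (b * c - b * Y) / c, by omega, le_rfl, ?_, by omega⟩
    have : c * ((b * c - b * Y) / c) ≤ c * Z := by omega
    exact Nat.le_of_mul_le_mul_left this hc
  · have hy : Y / c < a := Nat.div_lt_of_lt_mul (by linarith)
    have hy1 : c * (Y / c) ≤ Y := Nat.mul_div_le Y c
    have hy2 : Y < c * (Y / c + 1) := Nat.lt_mul_div_succ Y hc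
    have hz1 : b * (Z / b) ≤ Z := Nat.mul_div_le Z b
    have hz2 : Z < b * (Z / b + 1) := Nat.lt_mul_div_succ Z hb
    generalize Y / c = y at *
    generalize Z / b = z at *
    have hyz : a ≤ y + z := by
      by_contra hcon
      have hcon : y + z + 1 ≤ a := by omega
      have e1 : b * Y < b * (c * (y + 1)) := Nat.mul_lt_mul_of_pos_left hy2 hb
      have e2 : c * Z < c * (b * (z + 1)) := Nat.mul_lt_mul_of_pos_left hz2 hc
      have e3 : a * (2 * X) < a * (b * c) := Nat.mul_lt_mul_of_pos_left hX ha
      have e4 : (b * c) * (y + z + 1) ≤ (b * c) * a := Nat.mul_le_mul_left _ hcon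
      have e5 : (b * c) * 2 ≤ (b * c) * a := Nat.mul_le_mul_left _ h
      nlinarith
    obtain ⟨w, rfl⟩ : ∃ w, a = y + w := ⟨a - y, by omega⟩
    refine ⟨0, c * y, b * w, Nat.zero_le _, hy1, ?_, by ring⟩
    exact le_trans (Nat.mul_le_mul_left b (by omega)) hz1

theorem core (a b c : ℕ) (ha : 0 < a) (hb : 0 < b) (hc : 0 < c) :
    SplitP a b c (a * b * c) := by
  intro k X Y Z e
  rcases Nat.lt_or_ge X (b * c) with hX | hX
  swap
  · exact ⟨b * c, 0, 0, hX, Nat.zero_le _, Nat.zero_le _, by ring⟩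
  rcases Nat.lt_or_ge Y (a * c) with hY | hY
  swap
  · exact ⟨0, a * c, 0, Nat.zero_le _, hY, Nat.zero_le _, by ring⟩
  rcases Nat.lt_or_ge Z (a * b) with hZ | hZ
  swap
  · exact ⟨0, 0, a * b, Nat.zero_le _, Nat.zero_le _, hZ, by ring⟩
  have e1 := Nat.mul_lt_mul_of_pos_left hX ha
  have e2 := Nat.mul_lt_mul_of_pos_left hY hb
  have e3 := Nat.mul_lt_mul_of_pos_left hZ hc
  have hk : k < 2 := by
    by_contra hk
    have : 3 * (a * b * c) ≤ (k + 1) * (a * b * c) := Nat.mul_le_mul_right _ (by omega)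
    nlinarith
  obtain rfl | rfl : k = 0 ∨ k = 1 := by omega
  · exact ⟨X, Y, Z, le_rfl, le_rfl, le_rfl, by linarith⟩
  have e : a * X + b * Y + c * Z = 2 * (a * b * c) := by linarith
  rcases Nat.lt_or_ge (2 * X) (b * c) with hX2 | hX2
  · exact core_aux a b c X Y Z ha hb hc e hY hZ hX2
  rcases Nat.lt_or_ge (2 * Y) (a * c) with hY2 | hY2
  · obtain ⟨Y', X', Z', h1, h2, h3, h4⟩ := core_aux b a c Y X Z hb ha hc (by linarith) hX
      (by linarith) hY2
    exact ⟨X', Y', Z', h2, h1, h3, by linarith⟩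
  rcases Nat.lt_or_ge (2 * Z) (a * b) with hZ2 | hZ2
  · obtain ⟨Z', X', Y', h1, h2, h3, h4⟩ := core_aux c a b Z X Y hc ha hb (by linarith)
      (by linarith) (by linarith) hZ2
    exact ⟨X', Y', Z', h2, h3, h1, by linarith⟩
  refine ⟨b * c - X, a * c - Y, a * b - Z, by omega, by omega, by omega, ?_⟩
  zify [hX.le, hY.le, hZ.le]
  zify at e
  linarith

theorem SplitP.many {a b c l : ℕ} (h : SplitP a b c l) (m : ℕ) :
    ∀ j X Y Z : ℕ, a * X + b * Y + c * Z = (m + j) * l →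
    ∃ X' Y' Z' : ℕ, X' ≤ X ∧ Y' ≤ Y ∧ Z' ≤ Z ∧ a * X' + b * Y' + c * Z' = m * l := by
  induction m with
  | zero =>
    intro j X Y Z _
    exact ⟨0, 0, 0, Nat.zero_le _, Nat.zero_le _, Nat.zero_le _, by ring⟩
  | succ m ih =>
    intro j X Y Z e
    obtain ⟨X', Y', Z', h1, h2, h3, h4⟩ := h (m + j) X Y Z (by rw [e]; ring)
    obtain ⟨X1, rfl⟩ := Nat.exists_eq_add_of_le h1
    obtain ⟨Y1, rfl⟩ := Nat.exists_eq_add_of_le h2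
    obtain ⟨Z1, rfl⟩ := Nat.exists_eq_add_of_le h3
    obtain ⟨X2, Y2, Z2, g1, g2, g3, g4⟩ := ih j X1 Y1 Z1 (by linarith)
    exact ⟨X' + X2, Y' + Y2, Z' + Z2, by omega, by omega, by omega, by linarith⟩

theorem SplitP.mul {a b c l : ℕ} (h : SplitP a b c l) (m : ℕ) : SplitP a b c (m * l) := by
  intro k X Y Z e
  exact h.many m (k * m) X Y Z (by rw [e]; ring)

theorem SplitP.scale3 {a b c l : ℕ} (h : SplitP a b c l) (p : ℕ) (hp : 0 < p) :
    SplitP (p * a) (p * b) (p * c) (p * l) := by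
  intro k X Y Z e
  obtain ⟨X', Y', Z', h1, h2, h3, h4⟩ := h k X Y Z (Nat.eq_of_mul_eq_mul_left hp (by linarith))
  exact ⟨X', Y', Z', h1, h2, h3, by rw [← h4]; ring⟩

theorem SplitP.scale2 {a b c l : ℕ} (h : SplitP a b c l) (p : ℕ) (hp : 0 < p)
    (hc : p.Coprime a) : SplitP a (p * b) (p * c) (p * l) := by
  intro k X Y Z e
  have hd : p ∣ a * X := by
    have h1 : p ∣ a * X + p * (b * Y + c * Z) := ⟨(k + 1) * l, by linarith⟩
    exact (Nat.dvd_add_left (dvd_mul_right _ _)).1 h1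
  obtain ⟨X, rfl⟩ := hc.dvd_of_dvd_mul_left hd
  obtain ⟨X', Y', Z', h1, h2, h3, h4⟩ := h k X Y Z (Nat.eq_of_mul_eq_mul_left hp (by linarith))
  exact ⟨p * X', Y', Z', Nat.mul_le_mul_left _ h1, h2, h3, by rw [← h4]; ring⟩

theorem step_aux (N a b c l : ℕ) (ha : 0 < a) (hb : 0 < b) (hc : 0 < c)
    (hal : a ∣ l) (hbl : b ∣ l) (hcl : c ∣ l) (hN : a + b + c < N + 1)
    (ih : ∀ a b c l : ℕ, 0 < a → 0 < b → 0 < c → a ∣ l → b ∣ l → c ∣ l → a + b + c < N →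
      SplitP a b c l) (hbc : ¬ b.Coprime c) : SplitP a b c l := by
  obtain ⟨p, hp, ⟨b, rfl⟩, ⟨c, rfl⟩⟩ := Nat.Prime.not_coprime_iff_dvd.1 hbc
  have hp2 := hp.two_le
  have hp0 := hp.pos
  obtain ⟨l, rfl⟩ : p ∣ l := (dvd_mul_right p b).trans hbl
  have hb' : 0 < b := Nat.pos_of_mul_pos_left hb
  have hc' : 0 < c := Nat.pos_of_mul_pos_left hc
  have hbl' := Nat.dvd_of_mul_dvd_mul_left hp0 hbl
  have hcl' := Nat.dvd_of_mul_dvd_mul_left hp0 hcl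
  have hlb : 2 * b ≤ p * b := Nat.mul_le_mul_right b hp2
  have hlc : 2 * c ≤ p * c := Nat.mul_le_mul_right c hp2
  by_cases hpa : p ∣ a
  · obtain ⟨a, rfl⟩ := hpa
    have hla : 2 * a ≤ p * a := Nat.mul_le_mul_right a hp2
    exact (ih a b c l (Nat.pos_of_mul_pos_left ha) hb' hc' (Nat.dvd_of_mul_dvd_mul_left hp0 hal)
      hbl' hcl' (by omega)).scale3 p hp0
  · have hco : p.Coprime a := (Nat.Prime.coprime_iff_not_dvd hp).2 hpa
    exact (ih a b c l ha hb' hc' (hco.symm.dvd_of_dvd_mul_left hal) hbl' hcl'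
      (by omega)).scale2 p hp0 hco

theorem split_all (N : ℕ) : ∀ a b c l : ℕ, 0 < a → 0 < b → 0 < c → a ∣ l → b ∣ l → c ∣ l →
    a + b + c < N → SplitP a b c l := by
  induction N with
  | zero => intro a b c l _ _ _ _ _ _ h; omega
  | succ N ih =>
    intro a b c l ha hb hc hal hbl hcl hN
    by_cases h1 : b.Coprime c
    swap
    · exact step_aux N a b c l ha hb hc hal hbl hcl hN ih h1
    by_cases h2 : a.Coprime c
    swap
    · exact (step_aux N b a c l hb ha hc hbl hal hcl (by omega) ih h2).swap
    by_cases h3 : a.Coprime b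
    swap
    · exact (step_aux N c a b l hc ha hb hcl hal hbl (by omega) ih h3).rot
    have : a * b * c ∣ l :=
      Nat.Coprime.mul_dvd_of_dvd_of_dvd (Nat.Coprime.mul_left h2 h1)
        (Nat.Coprime.mul_dvd_of_dvd_of_dvd h3 hal hbl) hcl
    obtain ⟨m, rfl⟩ := this
    rw [mul_comm]
    exact (core a b c ha hb hc).mul m

theorem sub_sum {ι : Type*} [DecidableEq ι] (S : Finset ι) (x : ι → ℕ) :
    ∀ m, m ≤ ∑ i ∈ S, x i → ∃ y : ι → ℕ, (∀ i, y i ≤ x i) ∧ ∑ i ∈ S, y i = m := by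
  induction S using Finset.induction_on with
  | empty =>
    intro m hm
    exact ⟨0, fun i => Nat.zero_le _, by simp at hm ⊢; omega⟩
  | insert j S hj ih =>
    intro m hm
    rw [Finset.sum_insert hj] at hm
    obtain ⟨y, hy, hs⟩ := ih (m - x j ⊓ m) (by omega)
    refine ⟨Function.update y j (x j ⊓ m), ?_, ?_⟩
    · intro i
      by_cases h : i = j
      · subst h; simp
      · simp [h, hy]
    · rw [Finset.sum_insert hj, Finset.sum_update_of_notMem hj, hs]
      simp

theorem split_fin {ι : Type*} [Fintype ι] [DecidableEq ι] (a : ι → ℕ) (l : ℕ) (w : Fin 3 → ℕ)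
    (c : ι → Fin 3) (hw : ∀ j, 0 < w j) (hwl : ∀ j, w j ∣ l) (hc : ∀ i, a i = w (c i))
    (k : ℕ) (x : ι → ℕ) (e : ∑ i, a i * x i = (k + 1) * l) :
    ∃ y : ι → ℕ, (∀ i, y i ≤ x i) ∧ ∑ i, a i * y i = l := by
  have key : ∀ z : ι → ℕ, ∑ i, a i * z i = w 0 * (∑ i with c i = 0, z i) +
      w 1 * (∑ i with c i = 1, z i) + w 2 * (∑ i with c i = 2, z i) := by
    intro z
    rw [← Finset.sum_fiberwise (s := Finset.univ) (g := c), Fin.sum_univ_three]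
    simp only [Finset.mul_sum]
    congr 1
    congr 1
    all_goals
      refine Finset.sum_congr rfl fun i hi => ?_
      rw [hc, (Finset.mem_filter.1 hi).2]
  rw [key] at e
  obtain ⟨X, Y, Z, h1, h2, h3, h4⟩ := split_all _ (w 0) (w 1) (w 2) l (hw _) (hw _) (hw _)
    (hwl _) (hwl _) (hwl _) (Nat.lt_succ_self _) _ _ _ _ e
  obtain ⟨y0, p0, q0⟩ := sub_sum _ x _ h1
  obtain ⟨y1, p1, q1⟩ := sub_sum _ x _ h2
  obtain ⟨y2, p2, q2⟩ := sub_sum _ x _ h3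
  refine ⟨fun i => if c i = 0 then y0 i else if c i = 1 then y1 i else y2 i, ?_, ?_⟩
  · intro i
    dsimp only
    split_ifs
    exacts [p0 i, p1 i, p2 i]
  · rw [key, ← h4, ← q0, ← q1, ← q2]
    congr 1
    congr 1
    all_goals
      congr 1
      refine Finset.sum_congr rfl fun i hi => ?_
      rw [(Finset.mem_filter.1 hi).2]
      simp

theorem decomp {ι : Type*} [Fintype ι] [DecidableEq ι] (a : ι → ℕ) (l : ℕ) (ha : ∀ i, 0 < a i)
    (hs : ∀ (k : ℕ) (x : ι → ℕ), ∑ i, a i * x i = (k + 1) * l →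
      ∃ y : ι → ℕ, (∀ i, y i ≤ x i) ∧ ∑ i, a i * y i = l) (k : ℕ) :
    ∀ x : ι → ℕ, ∑ i, a i * x i = k * l →
      ∃ f : Fin k → ι → ℕ, (∀ j, ∑ i, a i * f j i = l) ∧ x = ∑ j, f j := by
  induction k with
  | zero =>
    intro x e
    refine ⟨fun _ => 0, fun j => j.elim0, ?_⟩
    ext i
    simp at e
    rcases e i with h | h
    · exact absurd h (ha i).ne'
    · simp [h]
  | succ k ih =>
    intro x e
    obtain ⟨y, hy, hl⟩ := hs k x e
    have hx : ∀ i, x i = y i + (x i - y i) := fun i => by have := hy i; omega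
    obtain ⟨f, hf, hxf⟩ := ih (fun i => x i - y i) (by
      have : ∑ i, a i * x i = ∑ i, a i * y i + ∑ i, a i * (x i - y i) := by
        rw [← Finset.sum_add_distrib]
        exact Finset.sum_congr rfl fun i _ => by rw [← mul_add, ← hx i]
      rw [hl, e] at this
      linarith)
    refine ⟨Fin.cons y f, ?_, ?_⟩
    · intro j
      refine Fin.cases ?_ (fun j => ?_) j
      · simpa using hl
      · simpa using hf j
    · rw [Fin.sum_univ_succ]
      simp only [Fin.cons_zero, Fin.cons_succ]
      rw [← hxf]
      ext i
      exact hx i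

theorem stmt_4 (n : ℕ) (a : Fin (n + 1) → ℕ) (ha : ∀ i, 0 < a i)
    (hcard : (Finset.univ.image a).card ≤ 3) :
    IsNormal (convexHull ℝ
      (Set.range fun i : Fin (n + 1) =>
        Pi.single i ((Finset.univ.lcm a / a i : ℕ) : ℝ))) := by
  have hdvd : ∀ i, a i ∣ Finset.univ.lcm a := fun i => Finset.dvd_lcm (Finset.mem_univ i)
  have hl0 : Finset.univ.lcm a ≠ 0 := by
    rw [Ne, Finset.lcm_eq_zero_iff]
    rintro ⟨i, _, hi⟩
    exact (ha i).ne' hi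
  generalize Finset.univ.lcm a = l at *
  have hlR : (l : ℝ) ≠ 0 := by exact_mod_cast hl0
  have hlpos : (0 : ℝ) < l := by positivity
  have haR : ∀ i, (a i : ℝ) ≠ 0 := fun i => by exact_mod_cast (ha i).ne'
  have hcast : ∀ i, ((l / a i : ℕ) : ℝ) = l / a i := fun i => Nat.cast_div (hdvd i) (haR i)
  -- membership facts
  have hmem : ∀ y : Fin (n + 1) → ℕ, ∑ i, a i * y i = l →
      (fun i => (y i : ℝ)) ∈ convexHull ℝ (Set.range fun i : Fin (n + 1) =>
        (Pi.single i ((l / a i : ℕ) : ℝ) : Fin (n + 1) → ℝ)) := by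
    intro y hy
    have hyR : ∑ i, (a i : ℝ) * y i = l := by exact_mod_cast hy
    have hsum : (fun i => (y i : ℝ)) = ∑ i, ((a i : ℝ) * y i / l) •
        (Pi.single i ((l / a i : ℕ) : ℝ) : Fin (n + 1) → ℝ) := by
      ext j
      rw [Finset.sum_apply, Finset.sum_eq_single j]
      · simp only [Pi.smul_apply, Pi.single_eq_same, smul_eq_mul, hcast]
        have := haR j
        field_simp
      · intro i _ hij
        simp [Pi.single_eq_of_ne hij.symm]
      · simp
    rw [hsum]
    refine (convex_convexHull ℝ _).sum_mem (fun i _ => by positivity) ?_ ?_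
    · rw [← Finset.sum_div, hyR, div_self hlR]
    · intro i _
      exact subset_convexHull ℝ _ ⟨i, rfl⟩
  have hsub : convexHull ℝ (Set.range fun i : Fin (n + 1) =>
        (Pi.single i ((l / a i : ℕ) : ℝ) : Fin (n + 1) → ℝ)) ⊆
      {y | (∀ i, 0 ≤ y i) ∧ ∑ i, (a i : ℝ) * y i = l} := by
    refine convexHull_min ?_ ?_
    · rintro _ ⟨i, rfl⟩
      refine ⟨fun j => ?_, ?_⟩
      · by_cases h : j = i
        · subst h; simp
        · simp [h]
      · rw [Finset.sum_eq_single i]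
        · have := haR i
          simp only [Pi.single_eq_same, hcast]
          field_simp
        · intro j _ hj
          simp [hj]
        · simp
    · rintro u ⟨hu, hu'⟩ v ⟨hv, hv'⟩ s t hs ht hst
      refine ⟨fun i => ?_, ?_⟩
      · have := hu i
        have := hv i
        simp only [Pi.add_apply, Pi.smul_apply, smul_eq_mul]
        positivity
      · have : ∑ i, (a i : ℝ) * (s • u + t • v) i =
            s * ∑ i, (a i : ℝ) * u i + t * ∑ i, (a i : ℝ) * v i := by
          rw [Finset.mul_sum, Finset.mul_sum, ← Finset.sum_add_distrib]
          refine Finset.sum_congr rfl fun i _ => ?_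
          simp only [Pi.add_apply, Pi.smul_apply, smul_eq_mul]
          ring
        rw [this, hu', hv', ← add_mul, hst, one_mul]
  -- colouring
  have hcol : ∃ (w : Fin 3 → ℕ) (c : Fin (n + 1) → Fin 3),
      (∀ j, 0 < w j) ∧ (∀ j, w j ∣ l) ∧ ∀ i, a i = w (c i) := by
    obtain ⟨S, hS⟩ : ∃ S : Finset ℕ, S = Finset.univ.image a := ⟨_, rfl⟩
    rw [← hS] at hcard
    have hin : ∀ i, a i ∈ S := fun i => hS ▸ Finset.mem_image_of_mem a (Finset.mem_univ i)
    obtain ⟨e⟩ := Function.Embedding.nonempty_of_card_le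
      (α := ↥S) (β := Fin 3) (by simpa using hcard)
    haveI : Nonempty ↥S :=
      ⟨⟨a 0, hin 0⟩⟩
    have hval : ∀ v : ↥S, 0 < v.1 ∧ v.1 ∣ l := by
      rintro ⟨v, hv⟩
      obtain ⟨i, _, rfl⟩ := Finset.mem_image.1 (hS ▸ hv)
      exact ⟨ha i, hdvd i⟩
    refine ⟨fun j => (Function.invFun e j).1,
      fun i => e ⟨a i, hin i⟩,
      fun j => (hval _).1, fun j => (hval _).2, fun i => ?_⟩
    dsimp only
    rw [Function.leftInverse_invFun e.injective]
  obtain ⟨w, c, hw, hwl, hc⟩ := hcol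
  rintro k _ _ ⟨u, hu, rfl⟩ hlat
  obtain ⟨hu0, hul⟩ := hsub hu
  have hx : ∀ i, ∃ m : ℕ, ((k : ℝ) • u) i = (m : ℝ) := by
    intro i
    obtain ⟨z, hz⟩ := hlat i
    have h0 : (0 : ℝ) ≤ ((k : ℝ) • u) i := by
      have := hu0 i
      simp only [Pi.smul_apply, smul_eq_mul]
      positivity
    have hz' : ((k : ℝ) • u) i = (z : ℝ) := hz
    rw [hz'] at h0
    have hz0 : 0 ≤ z := by exact_mod_cast h0
    lift z to ℕ using hz0
    exact ⟨z, by simpa using hz'⟩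
  choose x hx using hx
  have hxs : ∑ i, a i * x i = k * l := by
    have : ∑ i, (a i : ℝ) * x i = k * l := by
      rw [← hul, Finset.mul_sum]
      refine Finset.sum_congr rfl fun i _ => ?_
      rw [← hx]
      simp only [Pi.smul_apply, smul_eq_mul]
      ring
    exact_mod_cast this
  obtain ⟨f, hf, hxf⟩ := decomp a l ha (split_fin a l w c hw hwl hc) k x hxs
  refine ⟨fun j i => (f j i : ℝ), fun j => ⟨hmem _ (hf j), fun i => ⟨f j i, by simp⟩⟩, ?_⟩
  ext i
  have h1 := hx i
  rw [hxf] at h1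
  simp only [Finset.sum_apply, Nat.cast_sum] at h1 ⊢
  exact h1
end

section
/- Let λ = (λ₁, …, λₙ) be an n-tuple of positive integers and let λ' = (λ_{i₁}, …, λ_{i_m}) with 1 ≤ i₁ < i₂ < ⋯ < i_m ≤ n be a subsequence of λ. If the rectangular simplex Δ(λ) ⊂ ℝⁿ is normal, then the rectangular simplex Δ(λ') ⊂ ℝᵐ is normal. -/
/-- If `Δ(λ)` is normal, then `Δ(λ')` is normal for every
subsequence `λ'` of `λ`. -/
theorem stmt_7 (n m : ℕ) (lam : Fin n → ℕ) (hlam : ∀ i, 0 < lam i)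
    (ι : Fin m → Fin n) (hι : StrictMono ι)
    (h : IsNormal (rectSimplex lam)) :
    IsNormal (rectSimplex (lam ∘ ι)) := by
  classical
  have hinj := hι.injective
  set E : (Fin m → ℝ) →ₗ[ℝ] (Fin n → ℝ) := Function.ExtendByZero.linearMap ℝ ι with hE
  set R : (Fin n → ℝ) →ₗ[ℝ] (Fin m → ℝ) := LinearMap.funLeft ℝ ℝ ι with hR
  have hEa : ∀ x i, E x (ι i) = x i := fun x i => hinj.extend_apply x (0 : Fin n → ℝ) i
  have hEb : ∀ x j, (¬ ∃ i, ι i = j) → E x j = 0 := fun x j hj =>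
    Function.extend_apply' x (0 : Fin n → ℝ) j hj
  have hRa : ∀ y i, R y i = y (ι i) := fun y i => rfl
  have hmapE : ∀ x ∈ rectSimplex (lam ∘ ι), E x ∈ rectSimplex lam := by
    intro x hx
    have h1 : E x ∈ E '' rectSimplex (lam ∘ ι) := ⟨x, hx, rfl⟩
    unfold rectSimplex at h1 ⊢
    rw [LinearMap.image_convexHull] at h1
    refine convexHull_mono ?_ h1
    rintro _ ⟨y, hy, rfl⟩
    rcases hy with rfl | ⟨i, rfl⟩
    · left; simp
    · right
      refine ⟨ι i, ?_⟩
      funext j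
      by_cases hj : ∃ i', ι i' = j
      · obtain ⟨i', rfl⟩ := hj
        rw [hEa]
        simp [Pi.single_apply, hinj.eq_iff]
      · rw [hEb _ _ hj]
        have : j ≠ ι i := fun e => hj ⟨i, e.symm⟩
        simp [Pi.single_apply, this]
  have hmapR : ∀ y ∈ rectSimplex lam, R y ∈ rectSimplex (lam ∘ ι) := by
    intro x hx
    have h1 : R x ∈ R '' rectSimplex lam := ⟨x, hx, rfl⟩
    unfold rectSimplex at h1 ⊢
    rw [LinearMap.image_convexHull] at h1
    refine convexHull_mono ?_ h1
    rintro _ ⟨y, hy, rfl⟩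
    rcases hy with rfl | ⟨j, rfl⟩
    · left; simp
    · by_cases hj : ∃ i', ι i' = j
      · obtain ⟨i', rfl⟩ := hj
        right
        refine ⟨i', ?_⟩
        funext i
        rw [hRa]
        simp [Pi.single_apply, hinj.eq_iff]
      · left
        funext i
        have : ι i ≠ j := fun e => hj ⟨i, e⟩
        rw [hRa]
        simp [Pi.single_apply, this]
  rintro k hk x ⟨p, hp, rfl⟩ hx
  obtain ⟨f, hf, hsum⟩ := h k hk (E ((k : ℝ) • p))
    ⟨E p, hmapE p hp, (map_smul E (k : ℝ) p).symm⟩ (by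
      intro j
      by_cases hj : ∃ i', ι i' = j
      · obtain ⟨i', rfl⟩ := hj
        rw [hEa]
        exact hx i'
      · exact ⟨0, by rw [hEb _ _ hj]; simp⟩)
  refine ⟨fun i => R (f i), fun i => ⟨hmapR _ (hf i).1, fun j => (hf i).2 (ι j)⟩, ?_⟩
  rw [← map_sum, ← hsum]
  funext i
  rw [hRa, hEa]
end

section
/- Let λ = (λ₁, …, λₙ) be an n-tuple of positive integers. The following are equivalent: (1) the rectangular simplex Δ(λ₁, …, λₙ) ⊂ ℝⁿ is normal; (2) the rectangular simplex Δ(λ₁, …, λₙ, 0) ⊂ ℝ^{n+1} (the convex hull of {0, λ₁e₁, …, λₙeₙ, 0·e_{n+1}}) is normal; (3) the rectangular simplex Δ(λ₁, …, λₙ, 1) ⊂ ℝ^{n+1} is normal. -/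
theorem mem_rectSimplex_iff {n : ℕ} (lam : Fin n → ℕ) (x : Fin n → ℝ) :
    x ∈ rectSimplex lam ↔
      (∀ i, 0 ≤ x i) ∧ (∀ i, lam i = 0 → x i = 0) ∧ ∑ i, x i / (lam i : ℝ) ≤ 1 := by
  constructor
  · intro hx
    let S : Set (Fin n → ℝ) :=
      {x | (∀ i, 0 ≤ x i) ∧ (∀ i, lam i = 0 → x i = 0) ∧ ∑ i, x i / (lam i : ℝ) ≤ 1}
    have hS : Convex ℝ S := by
      rintro y ⟨hy1, hy2, hy3⟩ z ⟨hz1, hz2, hz3⟩ a b ha hb hab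
      refine ⟨fun i => ?_, fun i hi => ?_, ?_⟩
      · have h1 := mul_nonneg ha (hy1 i)
        have h2 := mul_nonneg hb (hz1 i)
        simpa using add_nonneg h1 h2
      · simp [hy2 i hi, hz2 i hi]
      · have : ∑ i, (a • y + b • z) i / (lam i : ℝ)
            = a * ∑ i, y i / (lam i : ℝ) + b * ∑ i, z i / (lam i : ℝ) := by
          rw [Finset.mul_sum, Finset.mul_sum, ← Finset.sum_add_distrib]
          refine Finset.sum_congr rfl fun i _ => ?_
          simp only [Pi.add_apply, Pi.smul_apply, smul_eq_mul]
          ring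
        rw [this]
        nlinarith
    refine convexHull_min (t := S) ?_ hS hx
    rintro y (rfl | ⟨j, rfl⟩)
    · refine ⟨fun i => le_rfl, fun i _ => rfl, ?_⟩
      simp
    · refine ⟨fun i => ?_, fun i hi => ?_, ?_⟩
      · by_cases h : i = j
        · subst h; simp
        · simp [h]
      · by_cases h : i = j
        · subst h; simp [hi]
        · simp [h]
      · rw [Finset.sum_eq_single j]
        · simpa using div_self_le_one (lam j : ℝ)
        · intro i _ h
          simp [h]
        · simp
  · rintro ⟨h1, h2, h3⟩
    let w : Option (Fin n) → ℝ := fun o => o.elim (1 - ∑ i, x i / (lam i : ℝ))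
      (fun i => x i / (lam i : ℝ))
    let p : Option (Fin n) → (Fin n → ℝ) := fun o => o.elim 0
      (fun i => Pi.single i (lam i : ℝ))
    have key : ∑ o, w o • p o ∈ rectSimplex lam := by
      refine (convex_convexHull ℝ _).sum_mem ?_ ?_ ?_
      · rintro (_ | i) _
        · simpa [w] using h3
        · exact div_nonneg (h1 i) (Nat.cast_nonneg _)
      · simp [w, Fintype.sum_option]
      · rintro (_ | i) _
        · exact subset_convexHull ℝ _ (Set.mem_insert _ _)
        · exact subset_convexHull ℝ _ (Set.mem_insert_of_mem _ ⟨i, rfl⟩)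
    have e : ∑ o, w o • p o = x := by
      ext j
      simp only [Fintype.sum_option, w, p, Option.elim, Pi.add_apply, Finset.sum_apply,
        Pi.smul_apply, smul_eq_mul, Pi.zero_apply, mul_zero, zero_add]
      rw [Finset.sum_eq_single j]
      · rw [Pi.single_eq_same]
        by_cases h : lam j = 0
        · simp [h, h2 j h]
        · have : (lam j : ℝ) ≠ 0 := by exact_mod_cast h
          field_simp
      · intro i _ h
        rw [Pi.single_eq_of_ne (Ne.symm h), mul_zero]
      · simp
    rwa [e] at key

theorem mem_dilate_iff {n : ℕ} (lam : Fin n → ℕ) (k : ℕ) (x : Fin n → ℝ) :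
    x ∈ dilate k (rectSimplex lam) ↔
      (∀ i, 0 ≤ x i) ∧ (∀ i, lam i = 0 → x i = 0) ∧ ∑ i, x i / (lam i : ℝ) ≤ k := by
  constructor
  · rintro ⟨y, hy, rfl⟩
    obtain ⟨h1, h2, h3⟩ := (mem_rectSimplex_iff lam y).1 hy
    refine ⟨fun i => mul_nonneg (Nat.cast_nonneg _) (h1 i), fun i hi => ?_, ?_⟩
    · simp [h2 i hi]
    · simp only [Pi.smul_apply, smul_eq_mul, mul_div_assoc]
      rw [← Finset.mul_sum]
      exact mul_le_of_le_one_right (Nat.cast_nonneg _) h3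
  · rintro ⟨h1, h2, h3⟩
    rcases Nat.eq_zero_or_pos k with rfl | hk
    · refine ⟨0, (mem_rectSimplex_iff lam 0).2 ⟨fun _ => le_rfl, fun _ _ => rfl, by simp⟩, ?_⟩
      have hnn : ∀ i ∈ Finset.univ, 0 ≤ x i / (lam i : ℝ) :=
        fun i _ => div_nonneg (h1 i) (Nat.cast_nonneg _)
      have h0 : ∑ i, x i / (lam i : ℝ) = 0 :=
        le_antisymm (by simpa using h3) (Finset.sum_nonneg hnn)
      ext i
      have := (Finset.sum_eq_zero_iff_of_nonneg hnn).1 h0 i (Finset.mem_univ _)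
      rcases div_eq_zero_iff.1 this with h | h
      · simp [h]
      · simp [h2 i (by exact_mod_cast h)]
    · have hk' : (0 : ℝ) < k := by exact_mod_cast hk
      refine ⟨(k : ℝ)⁻¹ • x, (mem_rectSimplex_iff lam _).2 ⟨fun i => ?_, fun i hi => ?_, ?_⟩, ?_⟩
      · exact mul_nonneg (inv_nonneg.2 hk'.le) (h1 i)
      · simp [h2 i hi]
      · simp only [Pi.smul_apply, smul_eq_mul, mul_div_assoc]
        rw [← Finset.mul_sum, inv_mul_le_iff₀ hk']
        simpa using h3
      · exact smul_inv_smul₀ hk'.ne' x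

theorem snoc_mem_dilate_iff {n : ℕ} (lam : Fin n → ℕ) (a k : ℕ) (y : Fin n → ℝ) (t : ℝ) :
    (Fin.snoc y t : Fin (n + 1) → ℝ) ∈ dilate k (rectSimplex (Fin.snoc lam a)) ↔
      ((∀ i, 0 ≤ y i) ∧ 0 ≤ t) ∧ ((∀ i, lam i = 0 → y i = 0) ∧ (a = 0 → t = 0)) ∧
        ∑ i, y i / (lam i : ℝ) + t / (a : ℝ) ≤ k := by
  rw [mem_dilate_iff]
  simp [Fin.forall_fin_succ', Fin.sum_univ_castSucc]

theorem mem_iff_dilate_one {n : ℕ} (P : Set (Fin n → ℝ)) (x : Fin n → ℝ) :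
    x ∈ P ↔ x ∈ dilate 1 P := by
  simp [dilate]

theorem snoc_lattice_iff {n : ℕ} (y : Fin n → ℝ) (t : ℝ) :
    IsLatticePoint (Fin.snoc y t : Fin (n + 1) → ℝ) ↔
      IsLatticePoint y ∧ ∃ z : ℤ, t = (z : ℝ) := by
  simp [IsLatticePoint, Fin.forall_fin_succ']

theorem isIDP_zero {n : ℕ} (P : Set (Fin n → ℝ)) : IsIDP 0 P := by
  rintro x ⟨y, _, rfl⟩ _
  exact ⟨fun _ => 0, fun i => i.elim0, by simp⟩

/-- Restricting a decomposition to the first `n` coordinates. -/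
theorem normal_of_snoc {n : ℕ} (lam : Fin n → ℕ) (a : ℕ)
    (h : IsNormal (rectSimplex (Fin.snoc lam a : Fin (n + 1) → ℕ))) :
    IsNormal (rectSimplex lam) := by
  intro k hk x hx hl
  obtain ⟨h1, h2, h3⟩ := (mem_dilate_iff lam k x).1 hx
  obtain ⟨f, hf, hs⟩ := h k hk (Fin.snoc x 0)
    ((snoc_mem_dilate_iff lam a k x 0).2 ⟨⟨h1, le_rfl⟩, ⟨h2, fun _ => rfl⟩, by simpa using h3⟩)
    ((snoc_lattice_iff x 0).2 ⟨hl, 0, by simp⟩)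
  refine ⟨fun i => Fin.init (f i), fun i => ?_, ?_⟩
  · obtain ⟨hm, hli⟩ := hf i
    rw [← Fin.snoc_init_self (f i)] at hm hli
    rw [mem_iff_dilate_one, snoc_mem_dilate_iff] at hm
    refine ⟨?_, ((snoc_lattice_iff _ _).1 hli).1⟩
    rw [mem_iff_dilate_one, mem_dilate_iff]
    refine ⟨hm.1.1, hm.2.1.1, le_trans ?_ hm.2.2⟩
    exact le_add_of_nonneg_right (div_nonneg hm.1.2 (Nat.cast_nonneg _))
  · ext j
    have := congrFun hs j.castSucc
    simpa [Fin.init, Finset.sum_apply] using this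

theorem normal_snoc_zero {n : ℕ} (lam : Fin n → ℕ) (h : IsNormal (rectSimplex lam)) :
    IsNormal (rectSimplex (Fin.snoc lam 0 : Fin (n + 1) → ℕ)) := by
  intro k hk x hx hl
  rw [← Fin.snoc_init_self x] at hx hl
  rw [snoc_mem_dilate_iff] at hx
  obtain ⟨⟨h1, -⟩, ⟨h2, h0⟩, h3⟩ := hx
  have h0 := h0 rfl
  obtain ⟨f, hf, hs⟩ := h k hk (Fin.init x)
    ((mem_dilate_iff lam k _).2 ⟨h1, h2, by simpa using h3⟩) ((snoc_lattice_iff _ _).1 hl).1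
  refine ⟨fun i => Fin.snoc (f i) 0, fun i => ⟨?_, ?_⟩, ?_⟩
  · have hm := (hf i).1
    rw [mem_iff_dilate_one, mem_dilate_iff] at hm
    rw [mem_iff_dilate_one, snoc_mem_dilate_iff]
    exact ⟨⟨hm.1, le_rfl⟩, ⟨hm.2.1, fun _ => rfl⟩, by simpa using hm.2.2⟩
  · exact (snoc_lattice_iff _ _).2 ⟨(hf i).2, 0, by simp⟩
  · ext j
    refine Fin.lastCases ?_ (fun j => ?_) j
    · simpa [Finset.sum_apply] using h0
    · have := congrFun hs j
      simpa [Fin.init, Finset.sum_apply] using this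

theorem normal_snoc_one {n : ℕ} (lam : Fin n → ℕ) (h : IsNormal (rectSimplex lam)) :
    IsNormal (rectSimplex (Fin.snoc lam 1 : Fin (n + 1) → ℕ)) := by
  intro k hk x hx hl
  rw [← Fin.snoc_init_self x] at hx hl
  rw [snoc_mem_dilate_iff] at hx
  obtain ⟨⟨h1, ht⟩, ⟨h2, -⟩, h3⟩ := hx
  obtain ⟨hl1, z, hz⟩ := (snoc_lattice_iff _ _).1 hl
  rw [hz] at ht h3
  have hz0 : 0 ≤ z := by exact_mod_cast ht
  obtain ⟨t, rfl⟩ := Int.eq_ofNat_of_zero_le hz0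
  have hnn : 0 ≤ ∑ i, (Fin.init x : Fin n → ℝ) i / (lam i : ℝ) :=
    Finset.sum_nonneg fun i _ => div_nonneg (h1 i) (Nat.cast_nonneg _)
  simp only [Int.cast_natCast, Nat.cast_one, div_one] at h3 hz
  have htk : t ≤ k := by
    have : (t : ℝ) ≤ k := by linarith
    exact_mod_cast this
  obtain ⟨m, rfl⟩ := Nat.exists_eq_add_of_le' htk
  have hm : IsIDP m (rectSimplex lam) := by
    rcases Nat.eq_zero_or_pos m with rfl | hm
    · exact isIDP_zero _
    · exact h m hm
  obtain ⟨f, hf, hs⟩ := hm (Fin.init x)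
    ((mem_dilate_iff lam m _).2 ⟨h1, h2, by push_cast at h3; linarith⟩) hl1
  refine ⟨Fin.append (fun i => (Fin.snoc (f i) 0 : Fin (n + 1) → ℝ))
    (fun _ : Fin t => (Fin.snoc (0 : Fin n → ℝ) 1 : Fin (n + 1) → ℝ)), fun i => ?_, ?_⟩
  · refine Fin.addCases (fun i => ?_) (fun i => ?_) i
    · rw [Fin.append_left]
      have hm := (hf i).1
      rw [mem_iff_dilate_one, mem_dilate_iff] at hm
      rw [mem_iff_dilate_one, snoc_mem_dilate_iff]
      exact ⟨⟨⟨hm.1, le_rfl⟩, ⟨hm.2.1, fun _ => rfl⟩, by simpa using hm.2.2⟩,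
        (snoc_lattice_iff _ _).2 ⟨(hf i).2, 0, by simp⟩⟩
    · rw [Fin.append_right]
      rw [mem_iff_dilate_one, snoc_mem_dilate_iff]
      exact ⟨⟨⟨fun _ => le_rfl, zero_le_one⟩, ⟨fun _ _ => rfl, by simp⟩, by simp⟩,
        (snoc_lattice_iff _ _).2 ⟨fun _ => ⟨0, by simp⟩, 1, by simp⟩⟩
  · rw [Fin.sum_univ_add]
    simp only [Fin.append_left, Fin.append_right]
    ext j
    refine Fin.lastCases ?_ (fun j => ?_) j
    · simpa [Finset.sum_apply] using hz
    · have := congrFun hs j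
      simpa [Fin.init, Finset.sum_apply] using this

/-- `Δ(λ₁, …, λₙ)` is normal iff `Δ(λ₁, …, λₙ, 0)` is normal iff
`Δ(λ₁, …, λₙ, 1)` is normal. -/
theorem stmt_8 (n : ℕ) (lam : Fin n → ℕ) (hlam : ∀ i, 0 < lam i) :
    (IsNormal (rectSimplex lam) ↔ IsNormal (rectSimplex (Fin.snoc lam 0))) ∧
    (IsNormal (rectSimplex lam) ↔ IsNormal (rectSimplex (Fin.snoc lam 1))) := by
  exact ⟨⟨normal_snoc_zero lam, normal_of_snoc lam 0⟩,
    ⟨normal_snoc_one lam, normal_of_snoc lam 1⟩⟩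
end

section
/- Let λ = (λ₁, …, λₙ) be an n-tuple of positive integers. The following are equivalent: (1) the interior of the rectangular simplex Δ(λ) ⊂ ℝⁿ contains a lattice point; (2) the point (1, 1, …, 1) lies in the interior of Δ(λ); (3) ∑_{i=1}^n 1/λᵢ < 1. (Since Δ(λ) is full-dimensional, its relative interior equals its topological interior.) -/
theorem rectSimplex_eq {n : ℕ} (lam : Fin n → ℕ) (hlam : ∀ i, 0 < lam i) :
    rectSimplex lam = {x | (∀ i, 0 ≤ x i) ∧ ∑ i, x i / (lam i : ℝ) ≤ 1} := by
  have hl : ∀ i, (0 : ℝ) < lam i := fun i => by exact_mod_cast hlam i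
  apply Set.Subset.antisymm
  · apply convexHull_min
    · rintro x (rfl | ⟨i, rfl⟩)
      · simp
      · refine ⟨fun j => ?_, ?_⟩
        · by_cases h : j = i
          · subst h; simp
          · simp [Pi.single_eq_of_ne h]
        · rw [Finset.sum_eq_single i]
          · simp [(hl i).ne']
          · intro j _ h
            simp [Pi.single_eq_of_ne h]
          · simp
    · rintro x ⟨hx, hx1⟩ y ⟨hy, hy1⟩ a b ha hb hab
      refine ⟨fun i => ?_, ?_⟩
      · have := mul_nonneg ha (hx i)
        have := mul_nonneg hb (hy i)
        simp only [Pi.add_apply, Pi.smul_apply, smul_eq_mul]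
        linarith
      · have : ∑ i, (a • x + b • y) i / (lam i : ℝ)
            = a * ∑ i, x i / (lam i : ℝ) + b * ∑ i, y i / (lam i : ℝ) := by
          rw [Finset.mul_sum, Finset.mul_sum, ← Finset.sum_add_distrib]
          refine Finset.sum_congr rfl fun i _ => ?_
          simp only [Pi.add_apply, Pi.smul_apply, smul_eq_mul]
          ring
        rw [this]
        nlinarith
  · rintro x ⟨hx, hx1⟩
    have hconv : Convex ℝ (rectSimplex lam) := convex_convexHull ℝ _
    have h0 : (0 : Fin n → ℝ) ∈ rectSimplex lam :=
      subset_convexHull ℝ _ (Set.mem_insert _ _)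
    have h1 : ∀ i, (Pi.single i (lam i : ℝ) : Fin n → ℝ) ∈ rectSimplex lam := fun i =>
      subset_convexHull ℝ _ (Set.mem_insert_of_mem _ ⟨i, rfl⟩)
    have key := hconv.sum_mem (t := (Finset.univ : Finset (Option (Fin n))))
      (w := fun o => o.elim (1 - ∑ i, x i / (lam i : ℝ)) (fun i => x i / (lam i : ℝ)))
      (z := fun o => o.elim 0 (fun i => Pi.single i (lam i : ℝ)))
      (by
        rintro (_ | i) _
        · simpa using hx1
        · exact div_nonneg (hx i) (hl i).le)
      (by simp [Fintype.sum_option])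
      (by
        rintro (_ | i) _
        · exact h0
        · exact h1 i)
    convert key using 1
    ext j
    simp only [Fintype.sum_option, Option.elim, Pi.add_apply, Pi.zero_apply, mul_zero, zero_add,
      Finset.sum_apply, Pi.smul_apply, smul_eq_mul]
    have hs : ∑ i, x i / (lam i : ℝ) * (Pi.single i (lam i : ℝ) : Fin n → ℝ) j = x j := by
      rw [Finset.sum_eq_single j]
      · rw [Pi.single_eq_same, div_mul_cancel₀ _ (hl j).ne']
      · intro i _ h
        rw [Pi.single_eq_of_ne h.symm, mul_zero]
      · simp
    rw [hs]

theorem mem_interior_rectSimplex {n : ℕ} (lam : Fin n → ℕ) (hlam : ∀ i, 0 < lam i)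
    (x : Fin n → ℝ) :
    x ∈ interior (rectSimplex lam) ↔ (∀ i, 0 < x i) ∧ ∑ i, x i / (lam i : ℝ) < 1 := by
  have hl : ∀ i, (0 : ℝ) < lam i := fun i => by exact_mod_cast hlam i
  rw [rectSimplex_eq lam hlam]
  constructor
  · intro h
    have step : ∀ v : Fin n → ℝ, ∃ t : ℝ, 0 < t ∧
        (∀ i, 0 ≤ x i + t * v i) ∧ ∑ i, (x i + t * v i) / (lam i : ℝ) ≤ 1 := by
      intro v
      have hc : Continuous (fun t : ℝ => x + t • v) := by fun_prop
      have h2 := hc.continuousAt.preimage_mem_nhds (x := (0 : ℝ))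
        (by simpa using mem_interior_iff_mem_nhds.1 h)
      have h3 := (mem_nhdsWithin_of_mem_nhds h2 : _ ∈ nhdsWithin (0 : ℝ) (Set.Ioi 0))
      obtain ⟨t, ht, ht0⟩ := (Filter.nonempty_of_mem
        (Filter.inter_mem h3 self_mem_nhdsWithin))
      exact ⟨t, ht0, ht.1, ht.2⟩
    constructor
    · obtain ⟨t, ht, h1, -⟩ := step (fun _ => -1)
      intro i
      have := h1 i
      linarith
    · rcases isEmpty_or_nonempty (Fin n) with he | he
      · simp
      · obtain ⟨t, ht, -, h1⟩ := step (fun _ => 1)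
        refine lt_of_lt_of_le (Finset.sum_lt_sum_of_nonempty Finset.univ_nonempty ?_) h1
        intro i _
        exact div_lt_div_of_pos_right (by linarith) (hl i)
  · intro h
    refine mem_interior.2 ⟨{x | (∀ i, 0 < x i) ∧ ∑ i, x i / (lam i : ℝ) < 1}, ?_, ?_, h⟩
    · exact fun y hy => ⟨fun i => (hy.1 i).le, hy.2.le⟩
    · apply IsOpen.inter
      · change IsOpen {x : Fin n → ℝ | ∀ i, 0 < x i}
        rw [Set.ofPred_forall]
        exact isOpen_iInter_of_finite fun i => isOpen_lt continuous_const (continuous_apply i)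
      · have hc : Continuous fun x : Fin n → ℝ => ∑ i, x i / (lam i : ℝ) := by fun_prop
        exact isOpen_lt hc continuous_const

/-- TFAE: (1) the interior of `Δ(λ)` contains a lattice point;
(2) `(1, …, 1) ∈ interior Δ(λ)`; (3) `∑ 1/λᵢ < 1`. -/
theorem stmt_10 (n : ℕ) (lam : Fin n → ℕ) (hlam : ∀ i, 0 < lam i) :
    ((∃ x ∈ interior (rectSimplex lam), IsLatticePoint x) ↔
      (fun _ : Fin n => (1 : ℝ)) ∈ interior (rectSimplex lam)) ∧
    ((fun _ : Fin n => (1 : ℝ)) ∈ interior (rectSimplex lam) ↔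
      (∑ i, (1 : ℝ) / (lam i : ℝ)) < 1) := by 
  have h23 : (fun _ : Fin n => (1 : ℝ)) ∈ interior (rectSimplex lam) ↔
      (∑ i, (1 : ℝ) / (lam i : ℝ)) < 1 := by
    rw [mem_interior_rectSimplex lam hlam]
    simp
  refine ⟨⟨?_, fun h => ⟨_, h, fun i => ⟨1, by simp⟩⟩⟩, h23⟩
  rintro ⟨x, hx, hz⟩
  rw [h23]
  obtain ⟨hpos, hsum⟩ := (mem_interior_rectSimplex lam hlam x).1 hx
  refine lt_of_le_of_lt (Finset.sum_le_sum fun i _ => ?_) hsum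
  obtain ⟨z, hz⟩ := hz i
  have hp := hpos i
  rw [hz] at hp ⊢
  have h1 : (1 : ℤ) ≤ z := by exact_mod_cast hp
  exact div_le_div_of_nonneg_right (by exact_mod_cast h1) (Nat.cast_nonneg _)
end

section
/- Let λ = (λ₁, …, λₙ) be an n-tuple of positive integers and define d(λ) = ⌊∑_{i=1}^n 1/λᵢ⌋. If r is a positive integer with r ≥ n − d(λ), then the dilation rΔ(λ) is a normal polytope. -/
lemma aux_simplex_sub {n : ℕ} (lam : Fin n → ℕ) (hlam : ∀ i, 0 < lam i) (x : Fin n → ℝ)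
    (hx : x ∈ rectSimplex lam) : (∀ i, 0 ≤ x i) ∧ ∑ i, x i / (lam i : ℝ) ≤ 1 := by
  have hconv : Convex ℝ {x : Fin n → ℝ | (∀ i, 0 ≤ x i) ∧ ∑ i, x i / (lam i : ℝ) ≤ 1} := by
    rintro x ⟨hx0, hx1⟩ y ⟨hy0, hy1⟩ a b ha hb hab
    refine ⟨fun i => ?_, ?_⟩
    · have := mul_nonneg ha (hx0 i)
      have := mul_nonneg hb (hy0 i)
      simp only [Pi.add_apply, Pi.smul_apply, smul_eq_mul]
      linarith
    · have : ∑ i, (a • x + b • y) i / (lam i : ℝ)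
          = a * ∑ i, x i / (lam i : ℝ) + b * ∑ i, y i / (lam i : ℝ) := by
        rw [Finset.mul_sum, Finset.mul_sum, ← Finset.sum_add_distrib]
        refine Finset.sum_congr rfl fun i _ => ?_
        simp only [Pi.add_apply, Pi.smul_apply, smul_eq_mul]
        ring
      rw [this]
      nlinarith
  refine convexHull_min ?_ hconv hx
  rintro y (rfl | ⟨i, rfl⟩)
  · simp
  · refine ⟨fun j => ?_, ?_⟩
    · by_cases hj : j = i
      · subst hj; simp
      · simp [hj]
    · rw [Finset.sum_eq_single i]
      · have : (lam i : ℝ) ≠ 0 := by exact_mod_cast (hlam i).ne'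
        simp [this]
      · intro j _ hj
        simp [hj]
      · simp

lemma aux_simplex_mem {n : ℕ} (lam : Fin n → ℕ) (hlam : ∀ i, 0 < lam i) (x : Fin n → ℝ)
    (h0 : ∀ i, 0 ≤ x i) (h1 : ∑ i, x i / (lam i : ℝ) ≤ 1) : x ∈ rectSimplex lam := by
  have key := (convex_convexHull ℝ
    (insert 0 (Set.range fun i : Fin n => (Pi.single i ((lam i : ℝ)) : Fin n → ℝ)))).sum_mem
    (t := (Finset.univ : Finset (Option (Fin n))))
    (w := fun o => o.elim (1 - ∑ i, x i / (lam i : ℝ)) fun i => x i / (lam i : ℝ))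
    (z := fun o => o.elim 0 fun i => Pi.single i ((lam i : ℝ)))
    (by
      rintro (_ | i) _
      · simpa using h1
      · exact div_nonneg (h0 i) (Nat.cast_nonneg _))
    (by simp [Fintype.sum_option])
    (by
      rintro (_ | i) _
      · exact subset_convexHull _ _ (Set.mem_insert _ _)
      · exact subset_convexHull _ _ (Set.mem_insert_of_mem _ ⟨i, rfl⟩))
  rw [Fintype.sum_option] at key
  unfold rectSimplex
  convert key using 1
  ext j
  have : (lam j : ℝ) ≠ 0 := by exact_mod_cast (hlam j).ne'
  simp only [Option.elim, smul_zero, zero_add, Finset.sum_apply, Pi.smul_apply, smul_eq_mul]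
  rw [Finset.sum_eq_single j]
  · simp [this]
  · intro i _ hi
    simp [Ne.symm hi]
  · simp

lemma aux_sub_sum {n : ℕ} (q : Fin n → ℕ) (j : ℕ) (hj : j ≤ ∑ i, q i) :
    ∃ p : Fin n → ℕ, (∀ i, p i ≤ q i) ∧ ∑ i, p i = j := by
  induction j with
  | zero => exact ⟨0, by simp, by simp⟩
  | succ j ih =>
    obtain ⟨p, hp, hs⟩ := ih (by omega)
    obtain ⟨i, _, hi⟩ := Finset.exists_lt_of_sum_lt (s := Finset.univ) (f := p) (g := q)
      (by omega)
    refine ⟨p + Pi.single i 1, fun k => ?_, ?_⟩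
    · by_cases hk : k = i
      · subst hk; simp; omega
      · simpa [hk] using hp k
    · simp [Finset.sum_add_distrib, hs]

lemma aux_split {n : ℕ} (lam : Fin n → ℕ) (hlam : ∀ i, 0 < lam i) (r : ℕ)
    (h : (n : ℝ) - ∑ i, (1 : ℝ) / (lam i : ℝ) ≤ r) (k : ℕ) (x : Fin n → ℕ)
    (hx : ∑ i, (x i : ℝ) / (lam i : ℝ) ≤ ((k + 1 : ℕ) : ℝ) * r) :
    ∃ y z : Fin n → ℕ, x = y + z ∧ ∑ i, (y i : ℝ) / (lam i : ℝ) ≤ r ∧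
      ∑ i, (z i : ℝ) / (lam i : ℝ) ≤ (k : ℝ) * r := by
  have hl : ∀ i, (0 : ℝ) < lam i := fun i => by exact_mod_cast hlam i
  set S : ℝ := ∑ i, ((x i % lam i : ℕ) : ℝ) / (lam i : ℝ) with hS
  have hSr : S ≤ r := by
    refine le_trans ?_ h
    have : (n : ℝ) - ∑ i, (1 : ℝ) / (lam i : ℝ) = ∑ i, (1 - 1 / (lam i : ℝ)) := by
      simp [Finset.sum_sub_distrib]
    rw [this]
    refine Finset.sum_le_sum fun i _ => ?_
    have h1 : x i % lam i + 1 ≤ lam i := Nat.mod_lt _ (hlam i)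
    have h2 : ((x i % lam i : ℕ) : ℝ) + 1 ≤ lam i := by exact_mod_cast h1
    rw [div_le_iff₀ (hl i), sub_mul, div_mul_cancel₀ _ (hl i).ne']
    linarith
  set Q : ℕ := ∑ i, x i / lam i with hQ
  have hxs : ∑ i, (x i : ℝ) / (lam i : ℝ) = Q + S := by
    rw [hQ, hS, Nat.cast_sum, ← Finset.sum_add_distrib]
    refine Finset.sum_congr rfl fun i _ => ?_
    have h1 : ((lam i * (x i / lam i) + x i % lam i : ℕ) : ℝ) = x i := by rw [Nat.div_add_mod]
    rw [← h1, Nat.cast_add, Nat.cast_mul, add_div, mul_div_cancel_left₀ _ (hl i).ne']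
  obtain ⟨m, hm1, hm2⟩ : ∃ m : ℕ, (m : ℝ) ≤ r - S ∧ (r : ℝ) - S < m + 1 :=
    ⟨_, Nat.floor_le (by linarith), Nat.lt_floor_add_one _⟩
  obtain ⟨p, hp, hps⟩ := aux_sub_sum (fun i => x i / lam i) (min Q m) (min_le_left _ _)
  refine ⟨fun i => x i % lam i + lam i * p i, fun i => lam i * (x i / lam i - p i), ?_, ?_, ?_⟩
  · funext i
    simp only [Pi.add_apply]
    rw [add_assoc, ← mul_add, Nat.add_sub_cancel' (hp i), Nat.mod_add_div]
  · have : ∑ i, ((x i % lam i + lam i * p i : ℕ) : ℝ) / (lam i : ℝ) = S + (min Q m : ℕ) := by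
      rw [hS, ← hps, Nat.cast_sum, ← Finset.sum_add_distrib]
      refine Finset.sum_congr rfl fun i _ => ?_
      rw [Nat.cast_add, Nat.cast_mul, add_div, mul_div_cancel_left₀ _ (hl i).ne']
    rw [this]
    have : ((min Q m : ℕ) : ℝ) ≤ m := by exact_mod_cast min_le_right _ _
    linarith
  · have e : ∑ i, ((lam i * (x i / lam i - p i) : ℕ) : ℝ) / (lam i : ℝ)
        = (Q : ℝ) - (min Q m : ℕ) := by
      rw [← hps, hQ, Nat.cast_sum, Nat.cast_sum, ← Finset.sum_sub_distrib]
      refine Finset.sum_congr rfl fun i _ => ?_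
      rw [Nat.cast_mul, mul_div_cancel_left₀ _ (hl i).ne', Nat.cast_sub (hp i)]
    rw [e]
    rw [hxs] at hx
    push_cast at hx
    have h3 : (Q : ℝ) < ((m + k * r + 1 : ℕ) : ℝ) := by push_cast; linarith
    have h4 : Q < m + k * r + 1 := by exact_mod_cast h3
    have h5 : Q ≤ k * r + min Q m := by
      rcases le_total Q m with h | h
      · rw [min_eq_left h]; omega
      · rw [min_eq_right h]; omega
    have h6 : (Q : ℝ) ≤ ((k * r + min Q m : ℕ) : ℝ) := by exact_mod_cast h5
    rw [Nat.cast_add, Nat.cast_mul] at h6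
    linarith

lemma aux_decomp {n : ℕ} (lam : Fin n → ℕ) (hlam : ∀ i, 0 < lam i) (r : ℕ)
    (h : (n : ℝ) - ∑ i, (1 : ℝ) / (lam i : ℝ) ≤ r) (k : ℕ) : ∀ (x : Fin n → ℕ),
    ∑ i, (x i : ℝ) / (lam i : ℝ) ≤ (k : ℝ) * r →
    ∃ f : Fin k → Fin n → ℕ, (∀ j, ∑ i, (f j i : ℝ) / (lam i : ℝ) ≤ r) ∧ x = ∑ j, f j := by
  induction k with
  | zero =>
    intro x hx
    refine ⟨fun _ => 0, fun j => j.elim0, ?_⟩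
    have hnn : ∀ i ∈ (Finset.univ : Finset (Fin n)), 0 ≤ (x i : ℝ) / (lam i : ℝ) :=
      fun i _ => by positivity
    have h0 : ∑ i, (x i : ℝ) / (lam i : ℝ) = 0 :=
      le_antisymm (by simpa using hx) (Finset.sum_nonneg hnn)
    rw [Finset.sum_eq_zero_iff_of_nonneg hnn] at h0
    funext i
    have h1 := h0 i (Finset.mem_univ i)
    have h2 := (hlam i).ne'
    simpa [h2] using h1
  | succ k ih =>
    intro x hx
    obtain ⟨y, z, rfl, hy, hz⟩ := aux_split lam hlam r h k x hx
    obtain ⟨f, hf, rfl⟩ := ih z hz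
    refine ⟨Fin.cons y f, fun j => ?_, ?_⟩
    · refine Fin.cases ?_ (fun j => ?_) j
      · simpa using hy
      · simpa using hf j
    · rw [Fin.sum_univ_succ]; simp

/-- With `d(λ) = ⌊∑ 1/λᵢ⌋`, if `r ≥ n - d(λ)` is a positive
integer, then `rΔ(λ)` is normal. -/
theorem stmt_11 (n : ℕ) (lam : Fin n → ℕ) (hlam : ∀ i, 0 < lam i)
    (r : ℕ) (hr : 0 < r)
    (h : (n : ℤ) - ⌊∑ i, (1 : ℝ) / (lam i : ℝ)⌋ ≤ (r : ℤ)) :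
    IsNormal (dilate r (rectSimplex lam)) := by
  have hh : (n : ℝ) - ∑ i, (1 : ℝ) / (lam i : ℝ) ≤ r := by
    have h1 : ((n : ℝ) - (⌊∑ i, (1 : ℝ) / (lam i : ℝ)⌋ : ℤ)) ≤ (r : ℝ) := by exact_mod_cast h
    have h2 := Int.floor_le (∑ i, (1 : ℝ) / (lam i : ℝ))
    linarith
  rintro k - x ⟨_, ⟨u, hu, rfl⟩, rfl⟩ hlat
  obtain ⟨hu0, hu1⟩ := aux_simplex_sub lam hlam u hu
  have hnat : ∀ i, ∃ m : ℕ, (k : ℝ) * ((r : ℝ) * u i) = m := by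
    intro i
    obtain ⟨z, hz⟩ := hlat i
    simp only [Pi.smul_apply, smul_eq_mul] at hz
    have h0 : (0 : ℝ) ≤ (z : ℝ) := by
      rw [← hz]; have := hu0 i; positivity
    have h0' : 0 ≤ z := by exact_mod_cast h0
    lift z to ℕ using h0'
    exact ⟨z, by rw [hz]; simp⟩
  choose x hx using hnat
  have hw : ∑ i, (x i : ℝ) / (lam i : ℝ) ≤ (k : ℝ) * r := by
    have : ∑ i, (x i : ℝ) / (lam i : ℝ) = (k : ℝ) * r * ∑ i, u i / (lam i : ℝ) := by
      rw [Finset.mul_sum]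
      refine Finset.sum_congr rfl fun i _ => ?_
      rw [← hx i]; ring
    rw [this]
    exact mul_le_of_le_one_right (by positivity) hu1
  obtain ⟨f, hf, hfx⟩ := aux_decomp lam hlam r hh k x hw
  refine ⟨fun j i => (f j i : ℝ), fun j => ⟨?_, fun i => ⟨f j i, by simp⟩⟩, ?_⟩
  · have hr' : (0 : ℝ) < r := by exact_mod_cast hr
    refine ⟨fun i => (f j i : ℝ) / r, aux_simplex_mem lam hlam _ (fun i => by positivity) ?_, ?_⟩
    · have : ∑ i, (f j i : ℝ) / r / (lam i : ℝ) = (∑ i, (f j i : ℝ) / (lam i : ℝ)) / r := by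
        rw [Finset.sum_div]
        refine Finset.sum_congr rfl fun i _ => ?_
        rw [div_right_comm]
      rw [this, div_le_one hr']
      exact hf j
    · funext i
      simp only [Pi.smul_apply, smul_eq_mul]
      field_simp
  · funext i
    have := congrFun hfx i
    simp only [Pi.smul_apply, smul_eq_mul, Finset.sum_apply] at this ⊢
    rw [hx i, this]
    push_cast
    rfl
end

section
/- Let n be a positive integer. The following are equivalent: (1) there exists an n-tuple λ of positive integers such that μ_norm(Δ(λ)) = n − 1 (i.e. there exists a maximally non-normal rectangular n-simplex); (2) the set of n-tuples λ of positive integers with μ_norm(Δ(λ)) = n − 1 is infinite. -/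
theorem exists_reduce {c : ℕ} (f : Fin c → ℤ) (hf : ∀ t, 0 ≤ f t) (y : ℤ) (hy : 0 ≤ y)
    (hs : y ≤ ∑ t, f t) : ∃ g : Fin c → ℤ, (∀ t, 0 ≤ g t ∧ g t ≤ f t) ∧ ∑ t, g t = y := by
  induction c generalizing y with
  | zero =>
    refine ⟨f, fun t => t.elim0, ?_⟩
    simp at hs ⊢
    omega
  | succ c ih =>
    rw [Fin.sum_univ_succ] at hs
    have h0 := hf 0
    obtain ⟨g, hg, hgs⟩ := ih (fun t => f t.succ) (fun t => hf _) (y - min y (f 0))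
      (by have := min_le_left y (f 0); omega)
      (by
        have : 0 ≤ ∑ t : Fin c, f t.succ := Finset.sum_nonneg fun t _ => hf _
        rcases min_cases y (f 0) with h | h <;> omega)
    refine ⟨Fin.cons (min y (f 0)) g, ?_, ?_⟩
    · intro t
      refine Fin.cases ?_ ?_ t
      · simp only [Fin.cons_zero]
        exact ⟨le_min hy h0, min_le_right _ _⟩
      · intro t
        simpa using hg t
    · rw [Fin.sum_univ_succ]
      simp [hgs]

theorem mem_rect {n : ℕ} (lam : Fin n → ℕ) (hl : ∀ i, 0 < lam i) (x : Fin n → ℝ) :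
    x ∈ rectSimplex lam ↔ (∀ i, 0 ≤ x i) ∧ ∑ i, x i / lam i ≤ 1 := by
  have hl' : ∀ i, (0 : ℝ) < lam i := fun i => by exact_mod_cast hl i
  constructor
  · intro hx
    have hc : Convex ℝ {x : Fin n → ℝ | (∀ i, 0 ≤ x i) ∧ ∑ i, x i / lam i ≤ 1} := by
      rintro x ⟨hx, hx'⟩ y ⟨hy, hy'⟩ a b ha hb hab
      refine ⟨fun i => ?_, ?_⟩
      · have := mul_nonneg ha (hx i)
        have := mul_nonneg hb (hy i)
        simp only [Pi.add_apply, Pi.smul_apply, smul_eq_mul]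
        linarith
      · have : ∑ i, (a • x + b • y) i / (lam i : ℝ)
            = a * ∑ i, x i / lam i + b * ∑ i, y i / lam i := by
          rw [Finset.mul_sum, Finset.mul_sum, ← Finset.sum_add_distrib]
          refine Finset.sum_congr rfl fun i _ => ?_
          simp only [Pi.add_apply, Pi.smul_apply, smul_eq_mul]
          ring
        rw [this]
        nlinarith
    refine convexHull_min ?_ hc hx
    rintro z (rfl | ⟨j, rfl⟩)
    · simp
    · refine ⟨fun i => ?_, ?_⟩
      · rcases eq_or_ne i j with rfl | h
        · simp
        · simp [Pi.single_apply, h]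
      · simp only
        rw [Finset.sum_eq_single j]
        · simp [(hl' j).ne']
        · intro i _ h
          simp [Pi.single_apply, h]
        · simp
  · rintro ⟨h0, h1⟩
    have hconv := convex_convexHull ℝ
      (insert (0 : Fin n → ℝ) (Set.range fun i => Pi.single i ((lam i : ℝ))))
    have key := hconv.sum_mem (t := (Finset.univ : Finset (Option (Fin n))))
      (w := fun o => o.elim (1 - ∑ i, x i / lam i) (fun i => x i / lam i))
      (z := fun o => o.elim 0 (fun i => Pi.single i ((lam i : ℝ))))
      (by
        rintro (_ | i) _
        · simpa using h1
        · exact div_nonneg (h0 i) (hl' i).le)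
      (by rw [Fintype.sum_option]; simp)
      (by
        rintro (_ | i) _
        · exact subset_convexHull ℝ _ (Set.mem_insert _ _)
        · exact subset_convexHull ℝ _ (Set.mem_insert_of_mem _ ⟨i, rfl⟩))
    rw [Fintype.sum_option] at key
    have e : x = ∑ i, (x i / lam i) • (Pi.single i ((lam i : ℝ)) : Fin n → ℝ) := by
      funext k
      rw [Finset.sum_apply, Finset.sum_eq_single k]
      · simp [(hl' k).ne']
      · intro b _ hb
        simp [Pi.single_apply, hb.symm]
      · simp
    rw [rectSimplex, e]
    simpa using key

theorem mem_dilate {n : ℕ} (lam : Fin n → ℕ) (hl : ∀ i, 0 < lam i) (k : ℕ) (hk : 1 ≤ k)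
    (x : Fin n → ℝ) :
    x ∈ dilate k (rectSimplex lam) ↔ (∀ i, 0 ≤ x i) ∧ ∑ i, x i / lam i ≤ k := by
  have hk' : (0 : ℝ) < k := by exact_mod_cast hk
  have hs : ∀ z : Fin n → ℝ, ∑ i, ((k : ℝ) • z) i / (lam i : ℝ) = k * ∑ i, z i / lam i := by
    intro z
    rw [Finset.mul_sum]
    refine Finset.sum_congr rfl fun i _ => ?_
    simp only [Pi.smul_apply, smul_eq_mul]
    ring
  constructor
  · rintro ⟨z, hz, rfl⟩
    rw [mem_rect lam hl] at hz
    refine ⟨fun i => mul_nonneg hk'.le (hz.1 i), ?_⟩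
    simp only [hs]
    nlinarith [hz.2]
  · rintro ⟨h0, h1⟩
    have hx : x = (k : ℝ) • ((k : ℝ)⁻¹ • x) := by
      rw [smul_smul, mul_inv_cancel₀ hk'.ne', one_smul]
    refine ⟨(k : ℝ)⁻¹ • x, ?_, hx.symm⟩
    rw [mem_rect lam hl]
    refine ⟨fun i => mul_nonneg (inv_nonneg.2 hk'.le) (h0 i), ?_⟩
    have := hs ((k : ℝ)⁻¹ • x)
    rw [← hx] at this
    rw [this] at h1
    by_contra hcon
    push Not at hcon
    nlinarith

theorem dilate_rect {n : ℕ} (lam : Fin n → ℕ) (hl : ∀ i, 0 < lam i) (k : ℕ) (hk : 1 ≤ k) :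
    dilate k (rectSimplex lam) = rectSimplex (fun i => k * lam i) := by
  have hk' : (0 : ℝ) < k := by exact_mod_cast hk
  ext x
  rw [mem_dilate lam hl k hk, mem_rect _ (fun i => Nat.mul_pos hk (hl i))]
  refine and_congr_right fun _ => ?_
  have : ∑ i, x i / lam i = k * ∑ i, x i / ((k * lam i : ℕ) : ℝ) := by
    rw [Finset.mul_sum]
    refine Finset.sum_congr rfl fun i _ => ?_
    have : (0 : ℝ) < lam i := by exact_mod_cast hl i
    push_cast
    field_simp
  rw [this]
  constructor
  · intro h
    by_contra hcon
    push Not at hcon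
    nlinarith
  · intro h
    nlinarith

/-- Integer version of the decomposition property. -/
def IntIDP {n : ℕ} (c : ℕ) (lam : Fin n → ℕ) : Prop :=
  ∀ x : Fin n → ℤ, (∀ i, 0 ≤ x i) → ∑ i, (x i : ℝ) / lam i ≤ c →
    ∃ f : Fin c → Fin n → ℤ,
      (∀ t, (∀ i, 0 ≤ f t i) ∧ ∑ i, (f t i : ℝ) / lam i ≤ 1) ∧ x = ∑ t, f t

theorem isIDP_iff {n : ℕ} (lam : Fin n → ℕ) (hl : ∀ i, 0 < lam i) (c : ℕ) (hc : 1 ≤ c) :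
    IsIDP c (rectSimplex lam) ↔ IntIDP c lam := by
  constructor
  · intro h x hx hs
    obtain ⟨f, hf, hxf⟩ := h (fun i => (x i : ℝ))
      ((mem_dilate lam hl c hc _).2 ⟨fun i => by exact_mod_cast hx i, hs⟩) (fun i => ⟨x i, rfl⟩)
    choose g hg using fun t => (hf t).2
    refine ⟨g, fun t => ?_, ?_⟩
    · have := (mem_rect lam hl _).1 (hf t).1
      refine ⟨fun i => ?_, ?_⟩
      · have h2 := this.1 i
        rw [hg t i] at h2
        exact_mod_cast h2
      · have h2 := this.2
        simpa only [hg t] using h2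
    · funext i
      have := congrFun hxf i
      simp only [Finset.sum_apply, hg] at this
      rw [Finset.sum_apply]
      exact_mod_cast this
  · intro h x hx hlat
    choose z hz using hlat
    have hx' := (mem_dilate lam hl c hc _).1 hx
    obtain ⟨f, hf, hxf⟩ := h z
      (fun i => by have := hx'.1 i; rw [hz i] at this; exact_mod_cast this)
      (by simpa only [hz] using hx'.2)
    refine ⟨fun t i => (f t i : ℝ), fun t => ⟨?_, fun i => ⟨f t i, rfl⟩⟩, ?_⟩
    · rw [mem_rect lam hl]
      exact ⟨fun i => Int.cast_nonneg ((hf t).1 i), (hf t).2⟩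
    · funext i
      rw [hz i, hxf, Finset.sum_apply, Finset.sum_apply]
      push_cast
      rfl

theorem intIDP_transfer {n : ℕ} (lam lam' : Fin n → ℕ) (hl : ∀ i, 0 < lam i)
    (hl' : ∀ i, 0 < lam' i) (j : Fin n) (D : ℤ) (hj : (lam' j : ℤ) = lam j + D)
    (hne : ∀ i, i ≠ j → lam' i = lam i) (hD : ∀ i, i ≠ j → (lam i : ℤ) ∣ D) (c : ℕ)
    (h : IntIDP c lam) : IntIDP c lam' := by
  classical
  have hp : ∀ i, (0 : ℝ) < lam i := fun i => by exact_mod_cast hl i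
  have hp' : ∀ i, (0 : ℝ) < lam' i := fun i => by exact_mod_cast hl' i
  have hjr : (lam' j : ℝ) = lam j + D := by exact_mod_cast hj
  choose! e he using hD
  -- partial sums away from `j`
  let r : (Fin n → ℤ) → ℝ := fun x => ∑ i ∈ Finset.univ.erase j, (x i : ℝ) / lam i
  let R : (Fin n → ℤ) → ℤ := fun x => ∑ i ∈ Finset.univ.erase j, e i * x i
  have hR : ∀ x, (R x : ℝ) = D * r x := by
    intro x
    simp only [R, r, Int.cast_sum, Finset.mul_sum]
    refine Finset.sum_congr rfl fun i hi => ?_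
    have h1 : (D : ℝ) = lam i * e i := by exact_mod_cast he i (Finset.ne_of_mem_erase hi)
    rw [h1]
    have := hp i
    push_cast
    field_simp
  have hru : ∀ x y, r (Function.update x j y) = r x := by
    intro x y
    refine Finset.sum_congr rfl fun i hi => ?_
    rw [Function.update_of_ne (Finset.ne_of_mem_erase hi)]
  have hr0 : ∀ x : Fin n → ℤ, (∀ i, 0 ≤ x i) → 0 ≤ r x := fun x hx =>
    Finset.sum_nonneg fun i _ => div_nonneg (by exact_mod_cast hx i) (hp i).le
  have hm : ∀ (x : Fin n → ℤ) (C : ℝ),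
      ∑ i, (x i : ℝ) / lam i ≤ C ↔ (x j : ℝ) ≤ lam j * (C - r x) := by
    intro x C
    rw [← Finset.add_sum_erase _ _ (Finset.mem_univ j), mul_comm, ← div_le_iff₀ (hp j)]
    exact le_sub_iff_add_le.symm
  have hm' : ∀ (x : Fin n → ℤ) (C : ℝ),
      ∑ i, (x i : ℝ) / lam' i ≤ C ↔ (x j : ℝ) ≤ lam' j * (C - r x) := by
    intro x C
    have : r x = ∑ i ∈ Finset.univ.erase j, (x i : ℝ) / lam' i :=
      Finset.sum_congr rfl fun i hi => by rw [hne i (Finset.ne_of_mem_erase hi)]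
    rw [← Finset.add_sum_erase _ _ (Finset.mem_univ j), mul_comm, ← div_le_iff₀ (hp' j), this]
    exact le_sub_iff_add_le.symm
  intro x hx hs
  rw [hm'] at hs
  have hcr : 0 ≤ (c : ℝ) - r x := by
    have h1 : (0 : ℝ) ≤ x j := by exact_mod_cast hx j
    have := hp' j
    by_contra hcon
    push Not at hcon
    nlinarith
  obtain ⟨f, hf, hxf⟩ := h (Function.update x j (max 0 (x j - (D * c - R x))))
    (by
      intro i
      rcases eq_or_ne i j with rfl | hi
      · simp
      · rw [Function.update_of_ne hi]; exact hx i)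
    (by
      rw [hm, hru, Function.update_self, Int.cast_max]
      refine max_le ?_ ?_
      · simpa using mul_nonneg (hp j).le hcr
      · push_cast
        rw [hR]
        rw [hjr] at hs
        linarith)
  have hfx : ∀ i, i ≠ j → ∑ t, f t i = x i := by
    intro i hi
    have := congrFun hxf i
    rw [Function.update_of_ne hi, Finset.sum_apply] at this
    exact this.symm
  have hfj : ∑ t, f t j = max 0 (x j - (D * c - R x)) := by
    have := congrFun hxf j
    rw [Function.update_self, Finset.sum_apply] at this
    exact this.symm
  have hRs : ∑ t, R (f t) = R x := by
    simp only [R]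
    rw [Finset.sum_comm]
    refine Finset.sum_congr rfl fun i hi => ?_
    rw [← Finset.mul_sum, hfx i (Finset.ne_of_mem_erase hi)]
  obtain ⟨g, hg, hgs⟩ := exists_reduce (fun t => max 0 (f t j + (D - R (f t))))
    (fun t => le_max_left _ _) (x j) (hx j) (by
      calc x j ≤ ∑ t, (f t j + (D - R (f t))) := by
            rw [Finset.sum_add_distrib, Finset.sum_sub_distrib, hRs, hfj]
            have := le_max_right 0 (x j - (D * c - R x))
            simp only [Finset.sum_const, Finset.card_univ, Fintype.card_fin, nsmul_eq_mul]
            rw [mul_comm (c : ℤ) D]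
            linarith
        _ ≤ _ := Finset.sum_le_sum fun t _ => le_max_right _ _)
  refine ⟨fun t => Function.update (f t) j (g t), fun t => ⟨fun i => ?_, ?_⟩, ?_⟩
  · rcases eq_or_ne i j with rfl | hi
    · simpa using (hg t).1
    · simp only [Function.update_of_ne hi]; exact (hf t).1 i
  · rw [hm', hru]
    simp only [Function.update_self]
    have h1 := (hm (f t) 1).1 (hf t).2
    have h0 : (0 : ℝ) ≤ f t j := by exact_mod_cast (hf t).1 j
    have h2 : 0 ≤ 1 - r (f t) := by
      have := hp j
      by_contra hcon
      push Not at hcon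
      nlinarith
    have h3 : (g t : ℝ) ≤ max 0 ((f t j : ℝ) + (D - R (f t))) := by exact_mod_cast (hg t).2
    refine h3.trans (max_le (mul_nonneg (hp' j).le h2) ?_)
    rw [hR, hjr]
    linarith
  · funext i
    rw [Finset.sum_apply]
    rcases eq_or_ne i j with rfl | hi
    · simp [hgs]
    · simp only [Function.update_of_ne hi]
      exact (hfx i hi).symm

theorem dilate_zero_rect {n : ℕ} (lam : Fin n → ℕ) :
    dilate 0 (rectSimplex lam) = {0} := by
  have h0 : (0 : Fin n → ℝ) ∈ rectSimplex lam := subset_convexHull ℝ _ (Set.mem_insert _ _)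
  ext x
  simp only [dilate, Set.mem_image, Set.mem_singleton_iff]
  constructor
  · rintro ⟨z, _, rfl⟩
    simp
  · rintro rfl
    exact ⟨0, h0, by simp⟩

theorem munorm_update {n : ℕ} (lam : Fin n → ℕ) (hl : ∀ i, 0 < lam i) (j : Fin n) (m : ℕ) :
    munorm (rectSimplex (Function.update lam j (lam j + m * ∏ i, lam i)))
      = munorm (rectSimplex lam) := by
  set lam' := Function.update lam j (lam j + m * ∏ i, lam i) with hlam'
  have hj : lam' j = lam j + m * ∏ i, lam i := by simp [hlam']
  have hne : ∀ i, i ≠ j → lam' i = lam i := fun i hi => by simp [hlam', hi]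
  have hl' : ∀ i, 0 < lam' i := by
    intro i
    rcases eq_or_ne i j with rfl | hi
    · rw [hj]; have := hl i; omega
    · rw [hne i hi]; exact hl i
  have key : ∀ k, IsNormal (dilate k (rectSimplex lam')) ↔ IsNormal (dilate k (rectSimplex lam)) := by
    intro k
    rcases Nat.eq_zero_or_pos k with rfl | hk
    · rw [dilate_zero_rect, dilate_zero_rect]
    rw [dilate_rect lam hl k hk, dilate_rect lam' hl' k hk]
    have hq : ∀ i, 0 < k * lam i := fun i => Nat.mul_pos hk (hl i)
    have hq' : ∀ i, 0 < k * lam' i := fun i => Nat.mul_pos hk (hl' i)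
    have hd : ∀ i, ((k * lam i : ℕ) : ℤ) ∣ ((k * (m * ∏ i, lam i) : ℕ) : ℤ) := fun i =>
      Int.natCast_dvd_natCast.2 (Nat.mul_dvd_mul_left k
        (Dvd.dvd.mul_left (Finset.dvd_prod_of_mem lam (Finset.mem_univ i)) m))
    refine forall_congr' fun c => forall_congr' fun hc => ?_
    rw [isIDP_iff _ hq' c hc, isIDP_iff _ hq c hc]
    constructor
    · refine intIDP_transfer _ _ hq' hq j (-((k * (m * ∏ i, lam i) : ℕ) : ℤ)) ?_ ?_ ?_ c
      · simp only [hj]; push_cast; ring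
      · intro i hi; simp only [hne i hi]
      · intro i hi; simp only [hne i hi]; exact (dvd_neg).2 (hd i)
    · refine intIDP_transfer _ _ hq hq' j ((k * (m * ∏ i, lam i) : ℕ) : ℤ) ?_ ?_ ?_ c
      · simp only [hj]; push_cast; ring
      · intro i hi; simp only [hne i hi]
      · intro i hi; exact hd i
  simp only [munorm, key]

/-- There exists a maximally non-normal rectangular `n`-simplex
iff there exist infinitely many. -/
theorem stmt_13 (n : ℕ) (hn : 0 < n) :
    (∃ lam : Fin n → ℕ, (∀ i, 0 < lam i) ∧ munorm (rectSimplex lam) = n - 1) ↔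
      {lam : Fin n → ℕ |
        (∀ i, 0 < lam i) ∧ munorm (rectSimplex lam) = n - 1}.Infinite := by
  constructor
  · rintro ⟨lam, hl, hmu⟩
    have hP : 0 < ∏ i, lam i := Finset.prod_pos fun i _ => hl i
    let j : Fin n := ⟨0, hn⟩
    refine Set.infinite_of_injective_forall_mem
      (f := fun m : ℕ => Function.update lam j (lam j + m * ∏ i, lam i)) ?_ ?_
    · intro a b hab
      have := congrFun hab j
      simp only [Function.update_self] at this
      exact Nat.eq_of_mul_eq_mul_right hP (Nat.add_left_cancel this)
    · intro m
      refine ⟨fun i => ?_, ?_⟩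
      · rcases eq_or_ne i j with rfl | hi
        · have := hl j
          simp only [Function.update_self]
          omega
        · simp only [Function.update_of_ne hi]; exact hl i
      · rw [munorm_update lam hl, hmu]
  · intro h
    exact h.nonempty
end
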